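/- arXiv:1307.6808 — 3 statements merged into one kernel-verified Lean document; each statement's English description precedes it below -/
import Mathlib

section
/- Assume in addition the unitarity condition: R(u) · P R(−u) P = γ(u) · Id_{V⊗V} for all u ∈ ℂ, where γ : ℂ → ℂ. Let n ≥ 2, c = (c_1,…,c_n) ∈ ℂ^n, and k ∈ {1,…,n−1} with γ(c_k−c_{k+1}) ≠ 0, and set A_k := P_{k,k+1} R_{k+1,k}(c_{k+1}−c_k) ∈ End(V^{⊗n}), where R_{k+1,k}(u) := P R(u) P acting on the factors k, k+1. Let c^{(s_k)} be obtained from c by exchanging c_k and c_{k+1}, and let W_c = Im F(c), W_{c^{(s_k)}} = Im F(c^{(s_k)}). If e_1, …, e_l ∈ V^{⊗n} are such that {F(c)e_1, …, F(c)e_l} is a basis of W_c, then {A_k F(c)e_1, …, A_k F(c)e_l} is a basis of W_{c^{(s_k)}}; in particular dim W_c = dim W_{c^{(s_k)}}. -/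
/-!
We model the finite-dimensional complex vector space `V` as `ℂ^N` (i.e. `Fin N → ℂ`),
so that `V^{⊗ n}` is `(Fin n → Fin N) → ℂ` and endomorphisms of `V^{⊗ n}` are matrices
indexed by multi-indices `Fin n → Fin N`.
-/

open scoped BigOperators

noncomputable section

/-- Endomorphisms of `V ⊗ V` for `V = ℂ^N`. -/
abbrev End2 (N : ℕ) := Matrix (Fin N × Fin N) (Fin N × Fin N) ℂ

/-- Endomorphisms of `V^{⊗ n}` for `V = ℂ^N`. -/
abbrev EndT (N n : ℕ) := Matrix (Fin n → Fin N) (Fin n → Fin N) ℂ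

/-- `X_{a,b}` : the endomorphism `X` of `V ⊗ V` applied to the tensor factors `a` and `b`
(in that order) of `V^{⊗ n}`, and the identity on all other factors. -/
def op2 (N n : ℕ) (X : End2 N) (a b : Fin n) : EndT N n :=
  fun f g => X (f a, f b) (g a, g b) *
    ∏ i : Fin n, if i ≠ a ∧ i ≠ b then (if f i = g i then (1 : ℂ) else 0) else 1

/-- The flip (permutation) operator `P : x ⊗ y ↦ y ⊗ x` on `V ⊗ V`. -/
def flipMat (N : ℕ) : End2 N := fun p q => if p.1 = q.2 ∧ p.2 = q.1 then 1 else 0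

/-- `R` is a solution of the Yang--Baxter equation (with additive spectral parameters)
on `V ⊗ V ⊗ V`:  `R₁₂(u) R₁₃(u+v) R₂₃(v) = R₂₃(v) R₁₃(u+v) R₁₂(u)`. -/
def YangBaxter (N : ℕ) (R : ℂ → End2 N) : Prop :=
  ∀ u v : ℂ,
    op2 N 3 (R u) 0 1 * op2 N 3 (R (u + v)) 0 2 * op2 N 3 (R v) 1 2 =
    op2 N 3 (R v) 1 2 * op2 N 3 (R (u + v)) 0 2 * op2 N 3 (R u) 0 1

/-- The fused operator `R_{c,c'}(u)`, acting on `V^{⊗ m}`, where the `n` factors of the first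
block are embedded via `a` and the `n'` factors of the second block via `b`:
`R_{c,c'}(u) = ∏→_{i=1..n'} [ R_{n,i'}(u+c_n−c'_i) ⋯ R_{2,i'}(u+c_2−c'_i) R_{1,i'}(u+c_1−c'_i) ]`. -/
def fusedOp (N : ℕ) (R : ℂ → End2 N) {m n n' : ℕ} (a : Fin n → Fin m) (b : Fin n' → Fin m)
    (c : Fin n → ℂ) (c' : Fin n' → ℂ) (u : ℂ) : EndT N m :=
  ((List.finRange n').map fun i =>
    (((List.finRange n).reverse).map fun k =>
      op2 N m (R (u + c k - c' i)) (a k) (b i)).prod).prod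

/-- The list of pairs `(i,j)` with `i < j`, in lexicographic order. -/
def lexPairs (n : ℕ) : List (Fin n × Fin n) :=
  (List.finRange n).flatMap fun i =>
    ((List.finRange n).filter fun j => decide (i < j)).map fun j => (i, j)

/-- The operator `F(c) = ∏→_{1 ≤ i < j ≤ n} R_{i,j}(c_i − c_j)` on `V^{⊗ n}`
(product over the pairs `i < j` in lexicographic order). -/
def Fop (N : ℕ) (R : ℂ → End2 N) {n : ℕ} (c : Fin n → ℂ) : EndT N n :=
  ((lexPairs n).map fun p => op2 N n (R (c p.1 - c p.2)) p.1 p.2).prod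

/-- The endomorphism of `V^{⊗ n}` embedded into `V^{⊗ m}`, acting on the factors listed
by `e` and identically on all other factors. -/
def opBlock (N : ℕ) {m n : ℕ} (e : Fin n → Fin m) (X : EndT N n) : EndT N m :=
  fun f g => X (f ∘ e) (g ∘ e) *
    ∏ i : Fin m, if ∀ k, e k ≠ i then (if f i = g i then (1 : ℂ) else 0) else 1

/-- The operator `P_π` on `V^{⊗ n}` permuting the tensor factors:
`P_π (x_1 ⊗ ⋯ ⊗ x_n) = x_{π(1)} ⊗ ⋯ ⊗ x_{π(n)}`. -/
def permMat (N n : ℕ) (π : Equiv.Perm (Fin n)) : EndT N n :=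
  fun f g => if f = g ∘ π then 1 else 0

/-- The tensor product of a vector of `V^{⊗ n}` and a vector of `V^{⊗ n'}`,
as a vector of `V^{⊗ (n+n')}`. -/
def tensVec (N : ℕ) {n n' : ℕ} (x : (Fin n → Fin N) → ℂ) (y : (Fin n' → Fin N) → ℂ) :
    (Fin (n + n') → Fin N) → ℂ :=
  fun f => x (fun i => f (Fin.castAdd n' i)) * y (fun j => f (Fin.natAdd n j))

end

/-!
Write `R_{ij} = R_{i,j}(c_i - c_j)` and, for a list `L` of distinct factors, let `F_L` be the
product of the `R_{ij}` over the pairs `(i, j)` with `i` before `j` in `L`. The Yang–Baxter equation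
and the commutation of operators on disjoint factors give
`R_{ba} F_{L₁ a b L₂} = F_{L₁ b a L₂} R_{ab}`, by induction on `L₁`. Conjugation by the flip
`P_{ab}` turns `F_{L₁ b a L₂}` for `c` into `F_{L₁ a b L₂}` for `c` with `c_a` and `c_b` exchanged,
so `A_k F(c) = F(c^{(s_k)}) B` with `B = P_{ab} R_{ab}`. Both `A_k` and `B` are invertible as soon
as the values of `R` at `±(c_a - c_b)` are, which unitarity guarantees; hence `A_k` maps the image
of `F(c)` isomorphically onto that of `F(c^{(s_k)})`.
-/

section OrderedPairProducts

variable {M ι κ : Type*} [Monoid M]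

/-- The product of `r i j` over the pairs with `i` before `j` in a list, in lexicographic order of
positions. Taking the list as an argument, rather than the order of the index type, lets two
neighbouring indices be exchanged without changing `r`. -/
def orderedPairProd (r : ι → ι → M) : List ι → M
  | [] => 1
  | i :: L => (L.map (r i)).prod * orderedPairProd r L

theorem orderedPairProd_map (r : κ → κ → M) (f : ι → κ) (L : List ι) :
    orderedPairProd r (L.map f) = orderedPairProd (fun i j => r (f i) (f j)) L := by
  induction L with
  | nil => rfl
  | cons i L ih => simp only [List.map_cons, orderedPairProd, List.map_map, ih]; rfl

theorem prod_map_prod_map_filter_lt [LinearOrder ι] (r : ι → ι → M) {L : List ι}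
    (hL : L.Pairwise (· < ·)) :
    (L.map fun i => ((L.filter (i < ·)).map (r i)).prod).prod = orderedPairProd r L := by
  induction L with
  | nil => rfl
  | cons i L ih =>
    obtain ⟨hi, hL⟩ := List.pairwise_cons.1 hL
    have hhead : (i :: L).filter (i < ·) = L := by simpa using hi
    have htail : ∀ j ∈ L, (i :: L).filter (j < ·) = L.filter (j < ·) := fun j hj => by
      simp [(hi j hj).not_gt]
    rw [List.map_cons, List.prod_cons, hhead, orderedPairProd, ← ih hL]
    congr 2
    exact List.map_congr_left fun j hj => by rw [htail j hj]

theorem semiconjBy_list_prod_map {x : M} {f g : ι → M} {L : List ι}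
    (h : ∀ i ∈ L, SemiconjBy x (f i) (g i)) : SemiconjBy x (L.map f).prod (L.map g).prod := by
  induction L with
  | nil => exact SemiconjBy.one_right x
  | cons i L ih =>
    rw [List.forall_mem_cons] at h
    exact h.1.mul_right (ih h.2)

theorem semiconjBy_orderedPairProd {x : M} {r r' : ι → ι → M} {L : List ι}
    (h : ∀ i ∈ L, ∀ j ∈ L, SemiconjBy x (r i j) (r' i j)) :
    SemiconjBy x (orderedPairProd r L) (orderedPairProd r' L) := by
  induction L with
  | nil => exact SemiconjBy.one_right x
  | cons i L ih =>
    refine SemiconjBy.mul_right (semiconjBy_list_prod_map fun j hj => ?_)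
      (ih fun j hj k hk => ?_)
    · exact h i List.mem_cons_self j (List.mem_cons_of_mem i hj)
    · exact h j (List.mem_cons_of_mem i hj) k (List.mem_cons_of_mem i hk)

/-- A family `r i j` in a monoid that behaves like the operators `R_{i,j}(c_i - c_j)`: it satisfies
the Yang–Baxter equation on distinct indices, with the spectral parameters absorbed into the
indices, and members with disjoint index pairs commute. -/
structure IsYangBaxterFamily (r : ι → ι → M) : Prop where
  yangBaxter : ∀ ⦃i j k : ι⦄, i ≠ j → i ≠ k → j ≠ k →
    r i j * r i k * r j k = r j k * r i k * r i j
  commute : ∀ ⦃i j k l : ι⦄, i ≠ k → i ≠ l → j ≠ k → j ≠ l → Commute (r i j) (r k l)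

namespace IsYangBaxterFamily

variable {r : ι → ι → M} {a b : ι}

theorem commute_prod_map (hr : IsYangBaxterFamily r) {i : ι} {L : List ι} (hia : i ≠ a)
    (hib : i ≠ b) (ha : a ∉ L) (hb : b ∉ L) : Commute (r a b) (L.map (r i)).prod :=
  Commute.list_prod_right _ _ <| List.forall_mem_map.2 fun _ hj =>
    hr.commute hia.symm (ne_of_mem_of_not_mem hj ha).symm hib.symm
      (ne_of_mem_of_not_mem hj hb).symm

theorem mul_prod_map_mul_prod_map (hr : IsYangBaxterFamily r) {L : List ι}
    (hL : (a :: b :: L).Nodup) :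
    r a b * ((L.map (r a)).prod * (L.map (r b)).prod) =
      (L.map (r b)).prod * (L.map (r a)).prod * r a b := by
  induction L with
  | nil => simp
  | cons j L ih =>
    simp only [List.nodup_cons, List.mem_cons, not_or] at hL ih
    obtain ⟨⟨hab, haj, haL⟩, ⟨hbj, hbL⟩, hjL, hL⟩ := hL
    simp only [List.map_cons, List.prod_cons]
    set A := (L.map (r a)).prod
    set B := (L.map (r b)).prod
    have hA : Commute (r b j) A := hr.commute_prod_map hab haj hbL hjL
    have hB : Commute (r a j) B := hr.commute_prod_map (Ne.symm hab) hbj haL hjL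
    calc r a b * (r a j * A * (r b j * B))
      _ = r a b * r a j * r b j * (A * B) := by simp only [mul_assoc, hA.left_comm]
      _ = r b j * r a j * (r a b * (A * B)) := by
        rw [hr.yangBaxter hab haj hbj]; simp only [mul_assoc]
      _ = r b j * r a j * (B * A * r a b) := by rw [ih ⟨⟨hab, haL⟩, hbL, hL⟩]
      _ = r b j * B * (r a j * A) * r a b := by simp only [mul_assoc, hB.left_comm]

theorem semiconjBy_prod_map_append_cons_cons (hr : IsYangBaxterFamily r) {i : ι} {L₁ L₂ : List ι}
    (hL : (i :: (L₁ ++ a :: b :: L₂)).Nodup) :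
    SemiconjBy (r b a) ((L₁ ++ a :: b :: L₂).map (r i)).prod
      ((L₁ ++ b :: a :: L₂).map (r i)).prod := by
  simp only [List.nodup_cons, List.nodup_append', List.mem_append, List.mem_cons, not_or,
    List.disjoint_cons_right] at hL
  obtain ⟨⟨-, hia, hib, -⟩, -, ⟨⟨hab, ha₂⟩, hb₂, -⟩, ha₁, hb₁, -⟩ := hL
  have hyb : SemiconjBy (r b a) (r i a * r i b) (r i b * r i a) :=
    (mul_assoc _ _ _).symm.trans (hr.yangBaxter hib hia (Ne.symm hab)).symm
  simp only [List.map_append, List.map_cons, List.prod_append, List.prod_cons]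
  rw [← mul_assoc (r i a), ← mul_assoc (r i b)]
  exact SemiconjBy.mul_right (hr.commute_prod_map hib hia hb₁ ha₁)
    (hyb.mul_right (hr.commute_prod_map hib hia hb₂ ha₂))

theorem mul_orderedPairProd_append_cons_cons (hr : IsYangBaxterFamily r) {L₁ L₂ : List ι}
    (hL : (L₁ ++ a :: b :: L₂).Nodup) :
    r b a * orderedPairProd r (L₁ ++ a :: b :: L₂) =
      orderedPairProd r (L₁ ++ b :: a :: L₂) * r a b := by
  induction L₁ with
  | nil =>
    have hab : Commute (r a b) (orderedPairProd r L₂) := by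
      simp only [List.nil_append, List.nodup_cons, List.mem_cons, not_or] at hL
      obtain ⟨⟨-, ha⟩, hb, -⟩ := hL
      exact semiconjBy_orderedPairProd fun i hi j hj =>
        hr.commute (ne_of_mem_of_not_mem hi ha).symm (ne_of_mem_of_not_mem hj ha).symm
          (ne_of_mem_of_not_mem hi hb).symm (ne_of_mem_of_not_mem hj hb).symm
    simp only [List.nil_append, orderedPairProd, List.map_cons, List.prod_cons]
    calc r b a * (r a b * (L₂.map (r a)).prod * ((L₂.map (r b)).prod * orderedPairProd r L₂))
      _ = r b a * (r a b * ((L₂.map (r a)).prod * (L₂.map (r b)).prod)) *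
          orderedPairProd r L₂ := by simp only [mul_assoc]
      _ = r b a * ((L₂.map (r b)).prod * (L₂.map (r a)).prod) *
          (r a b * orderedPairProd r L₂) := by
        rw [hr.mul_prod_map_mul_prod_map hL]; simp only [mul_assoc]
      _ = _ := by rw [hab.eq]; simp only [mul_assoc]
  | cons i L₁ ih =>
    simp only [List.cons_append, orderedPairProd]
    rw [← mul_assoc, (hr.semiconjBy_prod_map_append_cons_cons hL).eq, mul_assoc,
      ih (List.nodup_cons.1 hL).2, mul_assoc]

end IsYangBaxterFamily

end OrderedPairProducts

theorem map_swap_append_cons_cons {ι : Type*} [DecidableEq ι] {a b : ι} {L₁ L₂ : List ι}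
    (hL : (L₁ ++ a :: b :: L₂).Nodup) :
    (L₁ ++ a :: b :: L₂).map (Equiv.swap a b) = L₁ ++ b :: a :: L₂ := by
  simp only [List.nodup_append', List.nodup_cons, List.mem_cons, not_or,
    List.disjoint_cons_right] at hL
  obtain ⟨-, ⟨⟨-, ha₂⟩, hb₂, -⟩, ha₁, hb₁, -⟩ := hL
  have hfix {L : List ι} (ha : a ∉ L) (hb : b ∉ L) : L.map (Equiv.swap a b) = L :=
    (List.map_congr_left fun i hi => Equiv.swap_apply_of_ne_of_ne
      (ne_of_mem_of_not_mem hi ha) (ne_of_mem_of_not_mem hi hb)).trans (List.map_id L)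
  rw [List.map_append, List.map_cons, List.map_cons, hfix ha₁ hb₁, hfix ha₂ hb₂,
    Equiv.swap_apply_left, Equiv.swap_apply_right]

theorem exists_finRange_eq_append_cons_cons {n : ℕ} {a b : Fin n} (hab : (b : ℕ) = a + 1) :
    ∃ L₁ L₂ : List (Fin n), List.finRange n = L₁ ++ a :: b :: L₂ := by
  refine ⟨(List.finRange n).take a, (List.finRange n).drop (b + 1), ?_⟩
  conv_lhs => rw [← List.take_append_drop a (List.finRange n)]
  rw [List.drop_eq_getElem_cons (by simp), List.drop_eq_getElem_cons (by simp [← hab])]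
  simp only [List.getElem_finRange, ← hab, Fin.cast_mk, Fin.eta]

section TensorOperators

variable {N n m p : ℕ}

theorem opBlock_apply (e : Fin m → Fin n) (X : EndT N m) (f g : Fin n → Fin N) :
    opBlock N e X f g =
      if ∀ i ∉ Set.range e, f i = g i then X (f ∘ e) (g ∘ e) else 0 := by
  have hfactor (i : Fin n) : (if ∀ k, e k ≠ i then (if f i = g i then (1 : ℂ) else 0) else 1) =
      if i ∉ Set.range e → f i = g i then 1 else 0 := by
    simp only [← not_exists, ← Set.mem_range]
    split_ifs <;> simp_all
  simp only [opBlock, hfactor, Finset.prod_ite_zero, Finset.prod_const_one, Finset.mem_univ,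
    true_imp_iff, mul_ite, mul_one, mul_zero]

theorem opBlock_one (e : Fin m → Fin n) : opBlock N e 1 = 1 := by
  ext f g
  rw [opBlock_apply, Matrix.one_apply, Matrix.one_apply, ← ite_and]
  refine if_congr ⟨fun ⟨hoff, hon⟩ => funext fun i => ?_, ?_⟩ rfl rfl
  · by_cases hi : i ∈ Set.range e
    · obtain ⟨k, rfl⟩ := hi
      exact congrFun hon k
    · exact hoff i hi
  · rintro rfl
    exact ⟨fun _ _ => rfl, rfl⟩

theorem opBlock_mul_apply {e : Fin m → Fin n} (he : Function.Injective e) (X : EndT N m)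
    (Y : EndT N n) (f g : Fin n → Fin N) :
    (opBlock N e X * Y) f g = ∑ h, X (f ∘ e) h * Y (Function.extend e h f) g := by
  have hext (h : Fin m → Fin N) : Function.extend e h f ∘ e = h := Function.extend_comp he h f
  have hoff (h : Fin m → Fin N) {i : Fin n} (hi : i ∉ Set.range e) :
      Function.extend e h f i = f i := Function.extend_apply' h f i hi
  rw [Matrix.mul_apply]
  refine (Fintype.sum_of_injective (Function.extend e · f)
    (Function.LeftInverse.injective (g := (· ∘ e)) hext) _ _ (fun h hh => ?_) fun h => ?_).symm
  · rw [opBlock_apply, if_neg, zero_mul]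
    refine fun hf => hh ⟨h ∘ e, funext fun i => ?_⟩
    by_cases hi : i ∈ Set.range e
    · obtain ⟨k, rfl⟩ := hi
      exact he.extend_apply _ _ k
    · exact (hoff _ hi).trans (hf i hi)
  · rw [opBlock_apply, if_pos fun i hi => (hoff h hi).symm, hext]

theorem opBlock_mul {e : Fin m → Fin n} (he : Function.Injective e) (X Y : EndT N m) :
    opBlock N e (X * Y) = opBlock N e X * opBlock N e Y := by
  ext f g
  have hoff (h : Fin m → Fin N) : (∀ i ∉ Set.range e, Function.extend e h f i = g i) ↔
      ∀ i ∉ Set.range e, f i = g i :=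
    forall₂_congr fun i hi => by rw [Function.extend_apply' h f i hi]
  simp only [opBlock_mul_apply he, opBlock_apply, hoff, Function.extend_comp he, mul_ite, mul_zero,
    Matrix.mul_apply, Finset.sum_ite_irrel, Finset.sum_const_zero]

theorem opBlock_opBlock {e : Fin m → Fin n} (he : Function.Injective e) (e' : Fin p → Fin m)
    (X : EndT N p) : opBlock N e (opBlock N e' X) = opBlock N (e ∘ e') X := by
  ext f g
  simp only [opBlock_apply, ← ite_and]
  refine if_congr ⟨fun ⟨hoff, hon⟩ i hi => ?_, fun h => ⟨fun i hi => ?_, fun k hk => ?_⟩⟩ rfl rfl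
  · by_cases hie : i ∈ Set.range e
    · obtain ⟨k, rfl⟩ := hie
      exact hon k fun ⟨j, hj⟩ => hi ⟨j, congrArg e hj⟩
    · exact hoff i hie
  · exact h i fun hi' => hi (Set.range_comp_subset_range e' e hi')
  · exact h (e k) fun ⟨j, hj⟩ => hk ⟨j, he hj⟩

theorem opBlock_mul_opBlock_apply_of_disjoint {e : Fin m → Fin n} {e' : Fin p → Fin n}
    (hee' : Disjoint (Set.range e) (Set.range e')) (X : EndT N m) (Y : EndT N p)
    (f g : Fin n → Fin N) :
    (opBlock N e X * opBlock N e' Y) f g =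
      if ∀ i, i ∉ Set.range e → i ∉ Set.range e' → f i = g i then
        X (f ∘ e) (g ∘ e) * Y (f ∘ e') (g ∘ e') else 0 := by
  have hdisj {i : Fin n} (hi : i ∈ Set.range e') : i ∉ Set.range e :=
    Set.disjoint_right.1 hee' hi
  -- Off `e` the intermediate index must agree with `f`, and on `e` with `g`.
  set h₀ := (Set.range e).piecewise g f
  have h₀e : h₀ ∘ e = g ∘ e := funext fun k => Set.piecewise_eq_of_mem _ _ _ ⟨k, rfl⟩
  have h₀off {i : Fin n} (hi : i ∉ Set.range e) : h₀ i = f i := Set.piecewise_eq_of_notMem _ _ _ hi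
  have h₀e' : h₀ ∘ e' = f ∘ e' := funext fun k => h₀off (hdisj ⟨k, rfl⟩)
  rw [Matrix.mul_apply, Fintype.sum_eq_single h₀]
  · rw [opBlock_apply, if_pos fun i hi => (h₀off hi).symm, opBlock_apply, h₀e, h₀e', mul_ite,
      mul_zero]
    refine if_congr ⟨fun h i hi hi' => (h₀off hi).symm.trans (h i hi'), fun h i hi' => ?_⟩ rfl rfl
    by_cases hi : i ∈ Set.range e
    · exact Set.piecewise_eq_of_mem _ _ _ hi
    · exact (h₀off hi).trans (h i hi hi')
  · intro h hh
    rw [opBlock_apply, opBlock_apply, ite_zero_mul_ite_zero, if_neg]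
    refine fun ⟨hf, hg⟩ => hh (funext fun i => ?_)
    by_cases hi : i ∈ Set.range e
    · exact (hg i fun hi' => hdisj hi' hi).trans (Set.piecewise_eq_of_mem _ _ _ hi).symm
    · exact (hf i hi).symm.trans (h₀off hi).symm

theorem commute_opBlock_of_disjoint {e : Fin m → Fin n} {e' : Fin p → Fin n}
    (hee' : Disjoint (Set.range e) (Set.range e')) (X : EndT N m) (Y : EndT N p) :
    Commute (opBlock N e X) (opBlock N e' Y) := by
  ext f g
  rw [opBlock_mul_opBlock_apply_of_disjoint hee', opBlock_mul_opBlock_apply_of_disjoint hee'.symm]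
  exact if_congr (forall_congr' fun _ => ⟨fun h hi hi' => h hi' hi, fun h hi hi' => h hi' hi⟩)
    (mul_comm _ _) rfl

theorem permMat_mul_apply (π : Equiv.Perm (Fin n)) (X : EndT N n) (f g : Fin n → Fin N) :
    (permMat N n π * X) f g = X (f ∘ π.symm) g := by
  simp only [Matrix.mul_apply, permMat, ← Equiv.comp_symm_eq, ite_mul, one_mul, zero_mul,
    Finset.sum_ite_eq, Finset.mem_univ, if_true]

theorem mul_permMat_apply (π : Equiv.Perm (Fin n)) (X : EndT N n) (f g : Fin n → Fin N) :
    (X * permMat N n π) f g = X f (g ∘ π) := by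
  simp only [Matrix.mul_apply, permMat, mul_ite, mul_one, mul_zero, Finset.sum_ite_eq',
    Finset.mem_univ, if_true]

theorem semiconjBy_permMat_opBlock (π : Equiv.Perm (Fin n)) (e : Fin m → Fin n) (X : EndT N m) :
    SemiconjBy (permMat N n π) (opBlock N (π ∘ e) X) (opBlock N e X) := by
  ext f g
  rw [permMat_mul_apply, mul_permMat_apply, opBlock_apply, opBlock_apply]
  refine if_congr ?_ ?_ rfl
  · rw [← π.forall_congr_right]
    simp
  · congr 1; funext; simp

/-- An endomorphism of `V ⊗ V` as an endomorphism of the tensor power indexed by `Fin 2`. -/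
def endTwoEquiv (N : ℕ) : End2 N ≃* EndT N 2 :=
  (Matrix.reindexAlgEquiv ℂ ℂ (finTwoArrowEquiv (Fin N)).symm).toMulEquiv

theorem op2_eq_opBlock (X : End2 N) (a b : Fin n) :
    op2 N n X a b = opBlock N ![a, b] (endTwoEquiv N X) := by
  ext f g
  simp [op2, opBlock, endTwoEquiv, Fin.forall_fin_two, eq_comm]

theorem opBlock_op2 {e : Fin m → Fin n} (he : Function.Injective e) (X : End2 N) (a b : Fin m) :
    opBlock N e (op2 N m X a b) = op2 N n X (e a) (e b) := by
  rw [op2_eq_opBlock, op2_eq_opBlock, opBlock_opBlock he]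
  congr 1
  ext k
  fin_cases k <;> rfl

theorem isUnit_op2 {a b : Fin n} (hab : a ≠ b) {X : End2 N} (hX : IsUnit X) :
    IsUnit (op2 N n X a b) := by
  have he : Function.Injective ![a, b] := injective_pair_iff_ne.2 hab
  rw [op2_eq_opBlock]
  let φ : EndT N 2 →* EndT N n := ⟨⟨opBlock N ![a, b], opBlock_one _⟩, opBlock_mul he⟩
  exact (hX.map (endTwoEquiv N)).map φ

theorem commute_op2_of_disjoint {a b c d : Fin n} (hac : a ≠ c) (had : a ≠ d)
    (hbc : b ≠ c) (hbd : b ≠ d) (X Y : End2 N) :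
    Commute (op2 N n X a b) (op2 N n Y c d) := by
  rw [op2_eq_opBlock, op2_eq_opBlock]
  exact commute_opBlock_of_disjoint (by simp [hac.symm, had.symm, hbc.symm, hbd.symm]) _ _

theorem semiconjBy_permMat_op2 (π : Equiv.Perm (Fin n)) (X : End2 N) (a b : Fin n) :
    SemiconjBy (permMat N n π) (op2 N n X (π a) (π b)) (op2 N n X a b) := by
  have hcomp : ![π a, π b] = π ∘ ![a, b] := by ext k; fin_cases k <;> rfl
  rw [op2_eq_opBlock, op2_eq_opBlock, hcomp]
  exact semiconjBy_permMat_opBlock π ![a, b] _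

theorem op2_flipMat (a b : Fin n) :
    op2 N n (flipMat N) a b = permMat N n (Equiv.swap a b) := by
  ext f g
  have hswap : f = g ∘ Equiv.swap a b ↔
      (∀ i ∉ Set.range ![a, b], f i = g i) ∧ f a = g b ∧ f b = g a := by
    refine ⟨?_, fun ⟨hoff, ha, hb⟩ => funext fun i => ?_⟩
    · rintro rfl
      refine ⟨fun i hi => ?_, by simp, by simp⟩
      simp only [Matrix.range_cons, Matrix.range_empty, Set.union_empty, Set.mem_union,
        Set.mem_singleton_iff, not_or] at hi
      simp [Equiv.swap_apply_of_ne_of_ne hi.1 hi.2]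
    · rcases eq_or_ne i a with rfl | hia
      · simpa using ha
      rcases eq_or_ne i b with rfl | hib
      · simpa using hb
      simpa [Equiv.swap_apply_of_ne_of_ne hia hib] using hoff i (by simp [hia, hib])
  rw [op2_eq_opBlock, opBlock_apply, permMat, if_congr hswap rfl rfl, ite_and]
  rfl

theorem flipMat_mul_self : flipMat N * flipMat N = 1 := by
  ext ⟨i, j⟩ ⟨k, l⟩
  simp [Matrix.mul_apply, Matrix.one_apply, flipMat, Fintype.sum_prod_type, ite_and]

theorem isUnit_flipMat : IsUnit (flipMat N) := .of_mul_eq_one _ flipMat_mul_self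

end TensorOperators

section YangBaxter

variable {N n : ℕ}

theorem YangBaxter.op2_mul_op2_mul_op2 {R : ℂ → End2 N} (hR : YangBaxter N R) {a b j : Fin n}
    (hab : a ≠ b) (haj : a ≠ j) (hbj : b ≠ j) (x y : ℂ) :
    op2 N n (R x) a b * op2 N n (R (x + y)) a j * op2 N n (R y) b j =
      op2 N n (R y) b j * op2 N n (R (x + y)) a j * op2 N n (R x) a b := by
  have he : Function.Injective ![a, b, j] :=
    Fin.cons_injective_iff.2 ⟨by simp [hab, haj], injective_pair_iff_ne.2 hbj⟩
  simpa [opBlock_mul he, opBlock_op2 he] using congrArg (opBlock N ![a, b, j]) (hR x y)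

theorem YangBaxter.isYangBaxterFamily {R : ℂ → End2 N} (hR : YangBaxter N R)
    (c : Fin n → ℂ) :
    IsYangBaxterFamily fun i j => op2 N n (R (c i - c j)) i j where
  yangBaxter i j k hij hik hjk := by
    simpa using hR.op2_mul_op2_mul_op2 hij hik hjk (c i - c j) (c j - c k)
  commute _ _ _ _ hik hil hjk hjl := commute_op2_of_disjoint hik hil hjk hjl _ _

theorem Fop_eq_orderedPairProd (R : ℂ → End2 N) (c : Fin n → ℂ) :
    Fop N R c =
      orderedPairProd (fun i j => op2 N n (R (c i - c j)) i j) (List.finRange n) := by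
  rw [← prod_map_prod_map_filter_lt _ (List.pairwise_lt_finRange n), Fop, lexPairs,
    List.map_flatMap, List.flatMap_def, List.prod_flatten, List.map_map]
  simp only [Function.comp_def, List.map_map]

theorem permMat_mul_orderedPairProd (R : ℂ → End2 N) (c : Fin n → ℂ) (π : Equiv.Perm (Fin n)) :
    permMat N n π * orderedPairProd (fun i j => op2 N n (R (c i - c j)) i j)
      ((List.finRange n).map π) = Fop N R (c ∘ π) * permMat N n π := by
  rw [Fop_eq_orderedPairProd, orderedPairProd_map]
  exact (semiconjBy_orderedPairProd fun i _ j _ => semiconjBy_permMat_op2 π _ i j).eq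

theorem YangBaxter.op2_flipMat_mul_op2_mul_Fop {R : ℂ → End2 N} (hR : YangBaxter N R)
    (c : Fin n → ℂ) {a b : Fin n} (hab : (b : ℕ) = a + 1) :
    op2 N n (flipMat N) a b * op2 N n (R (c b - c a)) b a * Fop N R c =
      Fop N R (c ∘ Equiv.swap a b) *
        (op2 N n (flipMat N) a b * op2 N n (R (c a - c b)) a b) := by
  obtain ⟨L₁, L₂, hL⟩ := exists_finRange_eq_append_cons_cons hab
  have hnodup : (L₁ ++ a :: b :: L₂).Nodup := hL ▸ List.nodup_finRange n
  have hswap : (List.finRange n).map (Equiv.swap a b) = L₁ ++ b :: a :: L₂ := by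
    rw [hL, map_swap_append_cons_cons hnodup]
  rw [op2_flipMat, Fop_eq_orderedPairProd R c, hL, mul_assoc,
    (hR.isYangBaxterFamily c).mul_orderedPairProd_append_cons_cons hnodup, ← hswap, ← mul_assoc,
    permMat_mul_orderedPairProd, mul_assoc]

theorem isUnit_of_unitarity {X Y : End2 N} {z : ℂ} (hz : z ≠ 0)
    (hXY : X * (flipMat N * Y * flipMat N) = z • (1 : End2 N)) : IsUnit X ∧ IsUnit Y := by
  have hunit : IsUnit (X * (flipMat N * Y * flipMat N)) :=
    hXY ▸ (isUnit_one.smul (Units.mk0 z hz))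
  simp only [IsUnit.mul_iff] at hunit
  exact ⟨hunit.1, hunit.2.1.2⟩

end YangBaxter

theorem map_range_mulVecLin_of_mul_eq_mul {K l m n : Type*} [CommRing K] [Fintype m] [Fintype n]
    [DecidableEq n] {A : Matrix l m K} {F : Matrix m n K} {F' : Matrix l n K} {B : Matrix n n K}
    (h : A * F = F' * B) (hB : IsUnit B) :
    (LinearMap.range F.mulVecLin).map A.mulVecLin = LinearMap.range F'.mulVecLin := by
  have hsurj : LinearMap.range B.mulVecLin = ⊤ :=
    LinearMap.range_eq_top.2 (Matrix.mulVec_surjective_iff_isUnit.2 hB)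
  rw [← LinearMap.range_comp, ← Matrix.mulVecLin_mul, h, Matrix.mulVecLin_mul,
    LinearMap.range_comp_of_range_eq_top _ hsurj]

theorem basis_image_under_admissible_swap_general {N n : ℕ} {R : ℂ → End2 N}
    (hR : YangBaxter N R) (c : Fin n → ℂ) {a b : Fin n} (hab : (b : ℕ) = a + 1)
    (hRab : IsUnit (R (c a - c b))) (hRba : IsUnit (R (c b - c a)))
    {ι : Type*} (e : ι → (Fin n → Fin N) → ℂ)
    (hind : LinearIndependent ℂ fun i => (Fop N R c).mulVec (e i))
    (hspan : Submodule.span ℂ (Set.range fun i => (Fop N R c).mulVec (e i)) =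
      LinearMap.range (Matrix.mulVecLin (Fop N R c))) :
    (LinearIndependent ℂ fun i =>
      (op2 N n (flipMat N) a b * op2 N n (R (c b - c a)) b a).mulVec
        ((Fop N R c).mulVec (e i))) ∧
    Submodule.span ℂ (Set.range fun i =>
      (op2 N n (flipMat N) a b * op2 N n (R (c b - c a)) b a).mulVec
        ((Fop N R c).mulVec (e i))) =
      LinearMap.range (Matrix.mulVecLin (Fop N R (c ∘ Equiv.swap a b))) ∧
    Module.finrank ℂ ↥(LinearMap.range (Matrix.mulVecLin (Fop N R c))) =
      Module.finrank ℂ ↥(LinearMap.range (Matrix.mulVecLin (Fop N R (c ∘ Equiv.swap a b)))) := by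
  have hne : a ≠ b := by rintro rfl; omega
  have hP : IsUnit (op2 N n (flipMat N) a b) := isUnit_op2 hne isUnit_flipMat
  set A := op2 N n (flipMat N) a b * op2 N n (R (c b - c a)) b a
  have hA : Function.Injective A.mulVecLin :=
    Matrix.mulVec_injective_of_isUnit (hP.mul (isUnit_op2 hne.symm hRba))
  have hmap := map_range_mulVecLin_of_mul_eq_mul (hR.op2_flipMat_mul_op2_mul_Fop c hab)
    (hP.mul (isUnit_op2 hne hRab))
  refine ⟨hind.map' A.mulVecLin (LinearMap.ker_eq_bot.2 hA), ?_, ?_⟩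
  · rw [← hmap, ← hspan, Submodule.map_span, ← Set.range_comp]
    rfl
  · rw [← hmap]
    exact (Submodule.equivMapOfInjective A.mulVecLin hA _).finrank_eq

/-- Under the unitarity condition `R(u) · P R(−u) P = γ(u) Id`, if
`s_k` is admissible (`γ(c_k − c_{k+1}) ≠ 0`) and `{F(c)e_1, …, F(c)e_l}` is a basis of
`W_c = Im F(c)`, then `{A_k F(c)e_1, …, A_k F(c)e_l}` is a basis of `W_{c^{(s_k)}}`,
where `A_k := P_{k,k+1} R_{k+1,k}(c_{k+1}−c_k)`; in particular the two subspaces have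
the same dimension. -/
theorem basis_image_under_admissible_swap
    (N : ℕ) (R : ℂ → End2 N) (hR : YangBaxter N R)
    (γ : ℂ → ℂ)
    (hU : ∀ u : ℂ, R u * (flipMat N * R (-u) * flipMat N) = γ u • (1 : End2 N))
    (n : ℕ) (hn : 2 ≤ n) (c : Fin n → ℂ)
    (k : ℕ) (hk : k + 1 < n)
    (hγ : γ (c ⟨k, by omega⟩ - c ⟨k + 1, hk⟩) ≠ 0)
    (l : ℕ) (e : Fin l → ((Fin n → Fin N) → ℂ))
    (hind : LinearIndependent ℂ fun i => (Fop N R c).mulVec (e i))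
    (hspan : Submodule.span ℂ (Set.range fun i => (Fop N R c).mulVec (e i)) =
      LinearMap.range (Matrix.mulVecLin (Fop N R c))) :
    (LinearIndependent ℂ fun i =>
      (op2 N n (flipMat N) ⟨k, by omega⟩ ⟨k + 1, hk⟩ *
        op2 N n (R (c ⟨k + 1, hk⟩ - c ⟨k, by omega⟩)) ⟨k + 1, hk⟩ ⟨k, by omega⟩).mulVec
        ((Fop N R c).mulVec (e i))) ∧
    Submodule.span ℂ (Set.range fun i =>
      (op2 N n (flipMat N) ⟨k, by omega⟩ ⟨k + 1, hk⟩ *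
        op2 N n (R (c ⟨k + 1, hk⟩ - c ⟨k, by omega⟩)) ⟨k + 1, hk⟩ ⟨k, by omega⟩).mulVec
        ((Fop N R c).mulVec (e i))) =
      LinearMap.range (Matrix.mulVecLin
        (Fop N R (c ∘ Equiv.swap ⟨k, by omega⟩ ⟨k + 1, hk⟩))) ∧
    Module.finrank ℂ ↥(LinearMap.range (Matrix.mulVecLin (Fop N R c))) =
      Module.finrank ℂ ↥(LinearMap.range (Matrix.mulVecLin
        (Fop N R (c ∘ Equiv.swap ⟨k, by omega⟩ ⟨k + 1, hk⟩)))) := by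
  obtain ⟨hRab, hRba⟩ := isUnit_of_unitarity hγ (hU _)
  exact basis_image_under_admissible_swap_general hR c rfl hRab
    (neg_sub (c _) (c _) ▸ hRba) e hind hspan
end

section
/- Let c_2, c_3 ∈ ℂ with c_2 ≠ 0, c_3 ≠ 0 and c_2 ≠ c_3, and set Φ(0,c_2,c_3) := (1 + (1,2)/c_2)(1 + (1,3)/c_3)(1 − (2,3)/(c_2−c_3)) ∈ ℂS_3. Then there exists x ∈ ℂ with Φ(0,c_2,c_3)² = x · Φ(0,c_2,c_3) (i.e., Φ(0,c_2,c_3) is proportional to an idempotent of ℂS_3) if and only if (c_2,c_3) ∈ {(1,2), (1,−1), (−1,1), (−1,−2), (2,1), (−2,−1)}. -/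
/-!
Write `a = (1,2)`, `b = (1,3)`, `c = (2,3)`. The Yang–Baxter relation makes the coefficients of `ab`
and `ba` in the fusion function agree, so that it has the form
`Φ = 1 + p a + q b + r c + m (ab + ba)` with `m ≠ 0`.
Comparing the coefficients of `a`, `b`, `c` in `Φ² = xΦ` gives
`(p - q)(2 - 2m - x) = (q - r)(2 - 2m - x) = 0`.
So either `p = q = r`, or `x = 2 - 2m` and the remaining equations become `p + q + r = 0` and
`3m² + pq + qr + rp = 0`. In terms of `s = u₁ - u₂` and `t = u₂ - u₃` the first alternative says
`s = t = ±1`, and the second one says `st = -2` and `s + t = ±1`.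
-/

noncomputable section

/-- The evaluated fusion function
`Φ(0,c₂,c₃) = (1 + (1,2)/c₂)(1 + (1,3)/c₃)(1 − (2,3)/(c₂−c₃)) ∈ ℂS₃`
(the letters `1, 2, 3` are modelled by `0, 1, 2 : Fin 3`). -/
def PhiEval (c₂ c₃ : ℂ) : MonoidAlgebra ℂ (Equiv.Perm (Fin 3)) :=
  (1 + c₂⁻¹ • MonoidAlgebra.of ℂ (Equiv.Perm (Fin 3)) (Equiv.swap 0 1)) *
    (1 + c₃⁻¹ • MonoidAlgebra.of ℂ (Equiv.Perm (Fin 3)) (Equiv.swap 0 2)) *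
    (1 - (c₂ - c₃)⁻¹ • MonoidAlgebra.of ℂ (Equiv.Perm (Fin 3)) (Equiv.swap 1 2))

open Equiv

section InvSymmetric

variable {k : Type*}

/-- The general element of the group algebra `kS₃` that is fixed by the anti-automorphism
`g ↦ g⁻¹`: it has coefficient `n` at the identity, `p`, `q`, `r` at the transpositions `(1,2)`,
`(1,3)`, `(2,3)`, and `m` at both three-cycles. The fusion functions have this form. -/
def invSymmetric [Semiring k] (n p q r m : k) : MonoidAlgebra k (Perm (Fin 3)) :=
  .single 1 n + .single (swap 0 1) p + .single (swap 0 2) q + .single (swap 1 2) r +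
    .single (swap 0 1 * swap 0 2) m + .single (swap 0 2 * swap 0 1) m

theorem perm_fin_three_cases (σ : Perm (Fin 3)) :
    σ = 1 ∨ σ = swap 0 1 ∨ σ = swap 0 2 ∨ σ = swap 1 2 ∨
      σ = swap 0 1 * swap 0 2 ∨ σ = swap 0 2 * swap 0 1 := by
  revert σ
  decide

theorem invSymmetric_inj [Semiring k] {n p q r m n' p' q' r' m' : k} :
    invSymmetric n p q r m = invSymmetric n' p' q' r' m' ↔
      n = n' ∧ p = p' ∧ q = q' ∧ r = r' ∧ m = m' := by
  constructor
  · intro h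
    have coeff_eq (σ) := congrArg (fun f ↦ f.coeff σ) h
    have h_cycle := coeff_eq (swap 0 1 * swap 0 2)
    refine ⟨?_, ?_, ?_, ?_, ?_⟩
    · simpa +decide [invSymmetric] using coeff_eq 1
    · simpa +decide [invSymmetric] using coeff_eq (swap 0 1)
    · simpa +decide [invSymmetric] using coeff_eq (swap 0 2)
    · simpa +decide [invSymmetric] using coeff_eq (swap 1 2)
    · simpa +decide [invSymmetric] using h_cycle
  · rintro ⟨rfl, rfl, rfl, rfl, rfl⟩
    rfl

theorem smul_invSymmetric [Semiring k] (x n p q r m : k) :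
    x • invSymmetric n p q r m = invSymmetric (x * n) (x * p) (x * q) (x * r) (x * m) := by
  simp [invSymmetric]

theorem invSymmetric_mul_self [CommSemiring k] (n p q r m : k) :
    invSymmetric n p q r m * invSymmetric n p q r m =
      invSymmetric (n ^ 2 + p ^ 2 + q ^ 2 + r ^ 2 + 2 * m ^ 2)
        (2 * n * p + 2 * m * (q + r)) (2 * n * q + 2 * m * (p + r)) (2 * n * r + 2 * m * (p + q))
        (2 * n * m + m ^ 2 + (p * q + q * r + r * p)) := by
  ext σ
  rcases perm_fin_three_cases σ with rfl | rfl | rfl | rfl | rfl | rfl <;>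
    simp +decide [invSymmetric, mul_assoc, add_mul, Finsupp.single_apply] <;> ring

theorem invSymmetric_mul_self_eq_smul_iff [CommSemiring k] {x n p q r m : k} :
    invSymmetric n p q r m * invSymmetric n p q r m = x • invSymmetric n p q r m ↔
      n ^ 2 + p ^ 2 + q ^ 2 + r ^ 2 + 2 * m ^ 2 = x * n ∧
      2 * n * p + 2 * m * (q + r) = x * p ∧
      2 * n * q + 2 * m * (p + r) = x * q ∧
      2 * n * r + 2 * m * (p + q) = x * r ∧
      2 * n * m + m ^ 2 + (p * q + q * r + r * p) = x * m := by
  rw [invSymmetric_mul_self, smul_invSymmetric, invSymmetric_inj]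

theorem coeffs_eq_or_sum_eq_zero_of_mul_self_eq_smul [CommRing k] [NoZeroDivisors k]
    (h2 : (2 : k) ≠ 0) {x n p q r m : k} (hm : m ≠ 0)
    (h : invSymmetric n p q r m * invSymmetric n p q r m = x • invSymmetric n p q r m) :
    (p = q ∧ q = r) ∨ (p + q + r = 0 ∧ 3 * m ^ 2 + (p * q + q * r + r * p) = 0) := by
  obtain ⟨-, hp, hq, hr, h3⟩ := invSymmetric_mul_self_eq_smul_iff.mp h
  by_cases hx : 2 * (n - m) = x
  · subst hx
    refine .inr ⟨mul_left_cancel₀ (mul_ne_zero h2 hm) ?_, ?_⟩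
    · linear_combination hp
    · linear_combination h3
  · have hx : 2 * (n - m) - x ≠ 0 := sub_ne_zero.mpr hx
    refine .inl ⟨mul_left_cancel₀ hx ?_, mul_left_cancel₀ hx ?_⟩
    · linear_combination hp - hq
    · linear_combination hq - hr

theorem one_sub_smul_swap_mul_eq_invSymmetric [CommRing k] {α β γ : k}
    (h : α * γ = β * (α + γ)) :
    (1 - α • MonoidAlgebra.of k (Perm (Fin 3)) (swap 0 1)) *
        (1 - β • MonoidAlgebra.of k (Perm (Fin 3)) (swap 0 2)) *
        (1 - γ • MonoidAlgebra.of k (Perm (Fin 3)) (swap 1 2)) =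
      invSymmetric 1 (-α) (-(β * (1 + α * γ))) (-γ) (α * γ) := by
  ext σ
  rcases perm_fin_three_cases σ with rfl | rfl | rfl | rfl | rfl | rfl <;>
    simp +decide [invSymmetric, MonoidAlgebra.one_def, mul_assoc, sub_mul, mul_sub,
      Finsupp.single_apply] <;>
    grind

end InvSymmetric

section Fusion

variable {K : Type*} [Field K]

/-- The fusion function
`Φ(u₁,u₂,u₃) = (1 − (1,2)/(u₁−u₂))(1 − (1,3)/(u₁−u₃))(1 − (2,3)/(u₂−u₃)) ∈ KS₃`,
with the letters `1, 2, 3` modelled by `0, 1, 2 : Fin 3`. -/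
def fusion (u₁ u₂ u₃ : K) : MonoidAlgebra K (Perm (Fin 3)) :=
  (1 - (u₁ - u₂)⁻¹ • MonoidAlgebra.of K (Perm (Fin 3)) (swap 0 1)) *
    (1 - (u₁ - u₃)⁻¹ • MonoidAlgebra.of K (Perm (Fin 3)) (swap 0 2)) *
    (1 - (u₂ - u₃)⁻¹ • MonoidAlgebra.of K (Perm (Fin 3)) (swap 1 2))

theorem phiEval_eq_fusion (c₂ c₃ : ℂ) : PhiEval c₂ c₃ = fusion 0 c₂ c₃ := by
  simp [PhiEval, fusion, inv_neg]

theorem fusion_eq_invSymmetric {u₁ u₂ u₃ s t : K} (hs : s ≠ 0) (ht : t ≠ 0) (hst : s + t ≠ 0)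
    (h₁₂ : u₁ - u₂ = s) (h₂₃ : u₂ - u₃ = t) :
    fusion u₁ u₂ u₃ =
      invSymmetric 1 (-s⁻¹) (-((s + t)⁻¹ * (1 + s⁻¹ * t⁻¹))) (-t⁻¹) (s⁻¹ * t⁻¹) := by
  have h₁₃ : u₁ - u₃ = s + t := by rw [← h₁₂, ← h₂₃, sub_add_sub_cancel]
  rw [fusion, h₁₂, h₁₃, h₂₃]
  refine one_sub_smul_swap_mul_eq_invSymmetric ?_
  field_simp
  ring

theorem eq_and_sq_eq_one_of_coeffs_eq {s t p q r : K} (hs : s ≠ 0) (hst : s + t ≠ 0)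
    (hp : p = -s⁻¹) (hq : q = -((s + t)⁻¹ * (1 + s⁻¹ * t⁻¹))) (hr : r = -t⁻¹)
    (hpq : p = q) (hqr : q = r) : s = t ∧ s ^ 2 = 1 := by
  obtain rfl : s = t := by simpa [hp, hr] using hpq.trans hqr
  have h2 : (2 : K) ≠ 0 := left_ne_zero_of_mul (two_mul s ▸ hst)
  refine ⟨rfl, ?_⟩
  rw [hp, hq, ← two_mul] at hpq
  field_simp at hpq
  linear_combination -hpq

theorem mul_eq_neg_two_and_sq_eq_one_of_coeffs_sum_eq_zero (h2 : (2 : K) ≠ 0) {s t p q r m : K}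
    (hs : s ≠ 0) (ht : t ≠ 0) (hst : s + t ≠ 0) (hp : p = -s⁻¹)
    (hq : q = -((s + t)⁻¹ * (1 + s⁻¹ * t⁻¹))) (hr : r = -t⁻¹) (hm : m = s⁻¹ * t⁻¹)
    (hsum : p + q + r = 0) (hquad : 3 * m ^ 2 + (p * q + q * r + r * p) = 0) :
    s * t = -2 ∧ (s + t) ^ 2 = 1 := by
  have sq_of_sum : (s + t) ^ 2 = -1 - s * t := by
    rw [hp, hq, hr] at hsum
    field_simp at hsum
    linear_combination -hsum
  have sq_of_quad : (s + t) ^ 2 = 3 + s * t := by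
    have hquad' : 3 * m ^ 2 + r * p - (p + r) ^ 2 = 0 := by
      linear_combination hquad - (p + r) * hsum
    rw [hp, hr, hm] at hquad'
    field_simp at hquad'
    linear_combination -hquad'
  have hmul : s * t = -2 := mul_left_cancel₀ h2 (by linear_combination sq_of_sum - sq_of_quad)
  exact ⟨hmul, by linear_combination sq_of_sum - hmul⟩

theorem fusion_mul_self_of_sub_eq {u₁ u₂ u₃ s : K} (h2 : (2 : K) ≠ 0) (hs : s ^ 2 = 1)
    (h₁₂ : u₁ - u₂ = s) (h₂₃ : u₂ - u₃ = s) :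
    fusion u₁ u₂ u₃ * fusion u₁ u₂ u₃ = (6 : K) • fusion u₁ u₂ u₃ := by
  have hs₀ : s ≠ 0 := by
    rintro rfl
    simp at hs
  have hss : s + s ≠ 0 := two_mul s ▸ mul_ne_zero h2 hs₀
  have hinv : s⁻¹ = s := inv_eq_of_mul_eq_one_left (by rwa [← sq])
  have hq : (s + s)⁻¹ * (1 + s * s) = s :=
    (inv_mul_eq_iff_eq_mul₀ hss).mpr (by linear_combination -hs)
  rw [fusion_eq_invSymmetric hs₀ hs₀ hss h₁₂ h₂₃, hinv, hq, ← sq s, hs,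
    invSymmetric_mul_self_eq_smul_iff]
  exact ⟨by linear_combination 3 * hs, by ring, by ring, by ring, by linear_combination 3 * hs⟩

theorem fusion_mul_self_of_mul_eq_neg_two {u₁ u₂ u₃ s t : K} (h2 : (2 : K) ≠ 0)
    (hmul : s * t = -2) (hsq : (s + t) ^ 2 = 1) (h₁₂ : u₁ - u₂ = s) (h₂₃ : u₂ - u₃ = t) :
    fusion u₁ u₂ u₃ * fusion u₁ u₂ u₃ = (3 : K) • fusion u₁ u₂ u₃ := by
  have hmul₀ : s * t ≠ 0 := hmul ▸ neg_ne_zero.mpr h2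
  have hs : s ≠ 0 := left_ne_zero_of_mul hmul₀
  have ht : t ≠ 0 := right_ne_zero_of_mul hmul₀
  have hst : s + t ≠ 0 := by
    intro h
    simp [h] at hsq
  have hs_inv : s⁻¹ = -t / 2 := by grind
  have ht_inv : t⁻¹ = -s / 2 := by grind
  have hst_inv : (s + t)⁻¹ = s + t := inv_eq_of_mul_eq_one_left (by rwa [← sq])
  rw [fusion_eq_invSymmetric hs ht hst h₁₂ h₂₃, hs_inv, ht_inv, hst_inv,
    invSymmetric_mul_self_eq_smul_iff]
  refine ⟨?_, ?_, ?_, ?_, ?_⟩ <;> grind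

theorem exists_fusion_mul_self_eq_smul_iff {u₁ u₂ u₃ s t : K} (h2 : (2 : K) ≠ 0)
    (hs : s ≠ 0) (ht : t ≠ 0) (hst : s + t ≠ 0) (h₁₂ : u₁ - u₂ = s) (h₂₃ : u₂ - u₃ = t) :
    (∃ x : K, fusion u₁ u₂ u₃ * fusion u₁ u₂ u₃ = x • fusion u₁ u₂ u₃) ↔
      (s = t ∧ s ^ 2 = 1) ∨ (s * t = -2 ∧ (s + t) ^ 2 = 1) := by
  constructor
  · rintro ⟨x, hx⟩
    rw [fusion_eq_invSymmetric hs ht hst h₁₂ h₂₃] at hx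
    have hm : s⁻¹ * t⁻¹ ≠ 0 := mul_ne_zero (inv_ne_zero hs) (inv_ne_zero ht)
    rcases coeffs_eq_or_sum_eq_zero_of_mul_self_eq_smul h2 hm hx with
      ⟨hpq, hqr⟩ | ⟨hsum, hquad⟩
    · exact .inl (eq_and_sq_eq_one_of_coeffs_eq hs hst rfl rfl rfl hpq hqr)
    · exact .inr (mul_eq_neg_two_and_sq_eq_one_of_coeffs_sum_eq_zero h2 hs ht hst rfl rfl rfl rfl
        hsum hquad)
  · rintro (⟨rfl, hsq⟩ | ⟨hmul, hsq⟩)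
    · exact ⟨6, fusion_mul_self_of_sub_eq h2 hsq h₁₂ h₂₃⟩
    · exact ⟨3, fusion_mul_self_of_mul_eq_neg_two h2 hmul hsq h₁₂ h₂₃⟩

theorem neg_neg_add_mem_iff {R : Type*} [CommRing R] [NoZeroDivisors R] {s t : R} :
    (-s, -(s + t)) ∈ ({(1, 2), (1, -1), (-1, 1), (-1, -2), (2, 1), (-2, -1)} : Set (R × R)) ↔
      (s = t ∧ s ^ 2 = 1) ∨ (s * t = -2 ∧ (s + t) ^ 2 = 1) := by
  simp only [Set.mem_insert_iff, Set.mem_singleton_iff, Prod.mk.injEq]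
  constructor
  · grind
  · rintro (⟨rfl, hs⟩ | ⟨hmul, hsq⟩)
    · rcases sq_eq_one_iff.mp hs with rfl | rfl <;> grind
    · rcases sq_eq_one_iff.mp hsq with hadd | hadd
      · have hroots : (s - 2) * (s + 1) = 0 := by linear_combination s * hadd - hmul
        rcases mul_eq_zero.mp hroots with h | h <;> grind
      · have hroots : (s + 2) * (s - 1) = 0 := by linear_combination s * hadd - hmul
        rcases mul_eq_zero.mp hroots with h | h <;> grind

theorem phi_proportional_idempotent_iff_general (h2 : (2 : K) ≠ 0) {u₁ u₂ u₃ : K}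
    (h₁₂ : u₁ ≠ u₂) (h₁₃ : u₁ ≠ u₃) (h₂₃ : u₂ ≠ u₃) :
    (∃ x : K, fusion u₁ u₂ u₃ * fusion u₁ u₂ u₃ = x • fusion u₁ u₂ u₃) ↔
      (u₂ - u₁, u₃ - u₁) ∈
        ({(1, 2), (1, -1), (-1, 1), (-1, -2), (2, 1), (-2, -1)} : Set (K × K)) := by
  rw [exists_fusion_mul_self_eq_smul_iff h2 (sub_ne_zero.mpr h₁₂) (sub_ne_zero.mpr h₂₃)
    (by rwa [sub_add_sub_cancel, sub_ne_zero]) rfl rfl, ← neg_neg_add_mem_iff,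
    sub_add_sub_cancel, neg_sub, neg_sub]

end Fusion

/-- For `c₂, c₃ ≠ 0` and `c₂ ≠ c₃`, the element `Φ(0,c₂,c₃)` of `ℂS₃`
is proportional to an idempotent (i.e. `Φ² = xΦ` for some `x ∈ ℂ`) if and only if
`(c₂,c₃) ∈ {(1,2), (1,−1), (−1,1), (−1,−2), (2,1), (−2,−1)}`. -/
theorem phi_proportional_idempotent_iff
    (c₂ c₃ : ℂ) (h₂ : c₂ ≠ 0) (h₃ : c₃ ≠ 0) (h₂₃ : c₂ ≠ c₃) :
    (∃ x : ℂ, PhiEval c₂ c₃ * PhiEval c₂ c₃ = x • PhiEval c₂ c₃) ↔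
      (c₂, c₃) ∈ ({(1, 2), (1, -1), (-1, 1), (-1, -2), (2, 1), (-2, -1)} : Set (ℂ × ℂ)) := by
  simpa only [phiEval_eq_fusion, sub_zero] using
    phi_proportional_idempotent_iff_general two_ne_zero h₂.symm h₃.symm h₂₃

end
end

section
/- Let V be a complex vector space of finite dimension N, let λ be a partition of n with ℓ(λ) ≤ N, and let T be a standard Young tableau of shape λ whose classical contents cc(T|1), …, cc(T|n) are pairwise distinct. Define F(T) := ∏_{1≤i<j≤n}^{→} ( Id_{V^{⊗n}} − P_{i,j}/(cc(T|i)−cc(T|j)) ) ∈ End(V^{⊗n}), the product over pairs i < j in lexicographic order. Then the image W_T of F(T) is a nonzero subspace of V^{⊗n} that is invariant under the diagonal action of the Lie algebra gl(V) = End(V) (in which X ∈ gl(V) acts as Σ_{i=1}^{n} Id^{⊗(i−1)} ⊗ X ⊗ Id^{⊗(n−i)}), and W_T is an irreducible gl(V)-module. Moreover, if T' is another standard Young tableau of the same shape λ with pairwise distinct contents, then W_T and W_{T'} are isomorphic as gl(V)-modules. -/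
/-!
We model the complex vector space `V` of dimension `N` as `ℂ^N` (i.e. `Fin N → ℂ`), so that
`V^{⊗ n}` is `(Fin n → Fin N) → ℂ`, endomorphisms of `V^{⊗ n}` are matrices indexed by
multi-indices, and the Lie algebra `gl(V) = End(V)` is `Matrix (Fin N) (Fin N) ℂ`.

A standard Young tableau with `n` entries is modelled by the (injective) map
`T : Fin n → ℕ × ℕ` sending an entry (`0`-based) to the node containing it (`0`-based
`(row, column)` coordinates); its shape is `Set.range T`.
-/

open scoped BigOperators

noncomputable section

/-- The flip operator `P_{a,b}` on `V^{⊗ n}`, exchanging the tensor factors `a` and `b`. -/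
def flipOp (N n : ℕ) (a b : Fin n) : EndT N n :=
  fun f g => (if f a = g b ∧ f b = g a then (1 : ℂ) else 0) *
    ∏ i : Fin n, if i ≠ a ∧ i ≠ b then (if f i = g i then (1 : ℂ) else 0) else 1

/-- `T : Fin n → ℕ × ℕ` is a standard Young tableau: the set of its nodes is a Young
diagram (it is closed under decreasing either coordinate), and entries increase along
rows and down columns (equivalently, if the node of `i` is weakly north-west of the
node of `j` then `i ≤ j`; this also forces `T` to be injective). -/
def IsStandardTableau (n : ℕ) (T : Fin n → ℕ × ℕ) : Prop :=
  (∀ p ∈ Set.range T, ∀ q : ℕ × ℕ, q.1 ≤ p.1 → q.2 ≤ p.2 → q ∈ Set.range T) ∧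
  ∀ i j : Fin n, (T i).1 ≤ (T j).1 → (T i).2 ≤ (T j).2 → i ≤ j

/-- The classical content `cc(T|i) = y − x` of the node `(x,y)` of `T` containing `i`,
as a complex number. -/
def content {n : ℕ} (T : Fin n → ℕ × ℕ) (i : Fin n) : ℂ :=
  ((T i).2 : ℂ) - ((T i).1 : ℂ)

/-- `F(T) := ∏→_{1 ≤ i < j ≤ n} ( Id − P_{i,j}/(cc(T|i) − cc(T|j)) )`, product over the
pairs `i < j` in lexicographic order. -/
def FT (N : ℕ) {n : ℕ} (T : Fin n → ℕ × ℕ) : EndT N n :=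
  ((lexPairs n).map fun p =>
    (1 : EndT N n) - (content T p.1 - content T p.2)⁻¹ • flipOp N n p.1 p.2).prod

/-- The diagonal action of `X ∈ gl(V) = End(V)` on `V^{⊗ n}`:
`X ↦ Σ_{a=1}^{n} Id^{⊗(a−1)} ⊗ X ⊗ Id^{⊗(n−a)}`. -/
def glAct (N n : ℕ) (X : Matrix (Fin N) (Fin N) ℂ) : EndT N n :=
  ∑ a : Fin n, fun f g =>
    X (f a) (g a) * ∏ i : Fin n, if i ≠ a then (if f i = g i then (1 : ℂ) else 0) else 1

/-!
Equal contents lie on a common diagonal, so a diagram with pairwise distinct contents is a hook.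
By the Yang–Baxter equation, exchanging two neighbouring indices whose contents do not differ by
`±1` changes the fusion product only by units of the group algebra. In a hook this separates the arm
from the leg, so `F(T)` is, up to units, the product of the fusion products of the row and of the
column, which is the Young symmetrizer of the hook. Two consequences follow. Tableaux of the same
shape have conjugate symmetrizers, so a unit of the group algebra carries `W_T` onto `W_{T'}`. And
the element `f` acting as `F(T)` satisfies `f z f ∈ ℂ f` for all `z`; since `F(T)` is moreover
self-adjoint, averaging rank one operators over `S_n` shows that the commutant of `S_n` acts
transitively on the nonzero vectors of `W_T`. By Schur–Weyl duality this commutant is generated by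
`gl(V)`, so `W_T` is irreducible.
-/

/-- Two-sided analogue of `Associated`: `x` and `y` agree up to a unit on each side. -/
def BiAssociated {M : Type*} [Monoid M] (x y : M) : Prop :=
  ∃ u v : Mˣ, ↑u * x = y * ↑v

namespace BiAssociated

variable {M : Type*} [Monoid M] {x y z : M}

lemma refl (x : M) : BiAssociated x x :=
  ⟨1, 1, by simp⟩

lemma symm (h : BiAssociated x y) : BiAssociated y x := by
  obtain ⟨u, v, h⟩ := h
  exact ⟨u⁻¹, v⁻¹, by rw [Units.inv_mul_eq_iff_eq_mul, ← mul_assoc, h, Units.mul_inv_cancel_right]⟩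

lemma trans (hxy : BiAssociated x y) (hyz : BiAssociated y z) : BiAssociated x z := by
  obtain ⟨u, v, hxy⟩ := hxy
  obtain ⟨u', v', hyz⟩ := hyz
  exact ⟨u' * u, v' * v, by
    rw [Units.val_mul, mul_assoc, hxy, ← mul_assoc, hyz, mul_assoc, Units.val_mul]⟩

lemma mul_unit (x : M) (u : Mˣ) : BiAssociated (x * u) x :=
  ⟨1, u, by simp⟩

lemma conj (x : M) (u : Mˣ) : BiAssociated x (u * x * ↑u⁻¹) :=
  ⟨u, u, by simp⟩

lemma map {M' F : Type*} [Monoid M'] [FunLike F M M'] [MonoidHomClass F M M'] (φ : F)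
    (h : BiAssociated x y) : BiAssociated (φ x) (φ y) := by
  obtain ⟨u, v, h⟩ := h
  exact ⟨Units.map (φ : M →* M') u, Units.map (φ : M →* M') v, by simp [← map_mul, h]⟩

lemma ne_zero {M : Type*} [MonoidWithZero M] {x y : M} (h : BiAssociated x y) (hy : y ≠ 0) :
    x ≠ 0 := by
  obtain ⟨u, v, h⟩ := h
  rintro rfl
  exact hy ((Units.mul_left_eq_zero v).1 (by simpa using h.symm))

end BiAssociated

/-- `q * A * q` is contained in the line spanned by `q`, as for a multiple of a primitive
idempotent of a split algebra `A`. -/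
def HasScalarCorner (K : Type*) {A : Type*} [CommSemiring K] [Semiring A] [Algebra K A]
    (q : A) : Prop :=
  ∀ z : A, ∃ k : K, q * z * q = k • q

lemma HasScalarCorner.of_biAssociated {K A : Type*} [CommSemiring K] [Semiring A] [Algebra K A]
    {x y : A} (hy : HasScalarCorner K y) (h : BiAssociated x y) : HasScalarCorner K x := by
  obtain ⟨u, v, h⟩ := h
  intro z
  obtain ⟨k, hk⟩ := hy (v * z * ↑u⁻¹)
  refine ⟨k, u.isUnit.mul_left_cancel ?_⟩
  calc ↑u * (x * z * x) = ↑u * x * z * (↑u⁻¹ * (↑u * x)) := by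
        rw [Units.inv_mul_cancel_left, mul_assoc, mul_assoc, mul_assoc]
    _ = y * (v * z * ↑u⁻¹) * y * v := by simp only [h, mul_assoc]
    _ = ↑u * (k • x) := by rw [hk, smul_mul_assoc, ← h, mul_smul_comm]

section Fusion

open Equiv

variable {ι K E : Type*} [DecidableEq ι] [Field K] [Ring E] [Algebra K E]

/-- The Yang–Baxter factor `1 - P_{a,b} / (c_a - c_b)`. -/
def ybFactor (P : Perm ι →* E) (c : ι → K) (a b : ι) : E :=
  1 - (c a - c b)⁻¹ • P (swap a b)

/-- The ordered product of the factors `ybFactor P c a b` for `b` in a list. -/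
def ybRow (P : Perm ι →* E) (c : ι → K) (a : ι) (L : List ι) : E :=
  (L.map (ybFactor P c a)).prod

/-- The fusion product of a list: the ordered product of the factors `ybFactor P c a b` over the
pairs `(a, b)` with `a` before `b` in the list, in lexicographic order. -/
def fusionProd (P : Perm ι →* E) (c : ι → K) : List ι → E
  | [] => 1
  | a :: L => ybRow P c a L * fusionProd P c L

variable {P : Perm ι →* E} {c : ι → K}

@[simp] lemma ybRow_nil (a : ι) : ybRow P c a [] = 1 := rfl

@[simp] lemma ybRow_cons (a b : ι) (L : List ι) :
    ybRow P c a (b :: L) = ybFactor P c a b * ybRow P c a L :=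
  List.prod_cons

lemma ybRow_append (a : ι) (L M : List ι) :
    ybRow P c a (L ++ M) = ybRow P c a L * ybRow P c a M := by
  simp [ybRow]

@[simp] lemma fusionProd_nil : fusionProd P c [] = 1 := rfl

@[simp] lemma fusionProd_cons (a : ι) (L : List ι) :
    fusionProd P c (a :: L) = ybRow P c a L * fusionProd P c L := rfl

lemma map_fusionProd {F E' : Type*} [Ring E'] [Algebra K E'] [FunLike F E E']
    [AlgHomClass F K E E'] (φ : F) (L : List ι) :
    φ (fusionProd P c L) = fusionProd ((φ : E →* E').comp P) c L := by
  have map_ybFactor (a b : ι) :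
      φ (ybFactor P c a b) = ybFactor ((φ : E →* E').comp P) c a b := by
    simp [ybFactor]
  have map_ybRow (a : ι) (L : List ι) :
      φ (ybRow P c a L) = ybRow ((φ : E →* E').comp P) c a L := by
    simp [ybRow, map_list_prod, Function.comp_def, map_ybFactor]
  induction L with
  | nil => exact map_one φ
  | cons a L ih => rw [fusionProd_cons, map_mul, map_ybRow, ih, fusionProd_cons]

lemma one_sub_smul_mul_three {K E : Type*} [CommRing K] [Ring E] [Algebra K E] (u v w : K)
    (p q r : E) :
    (1 - u • p) * (1 - v • q) * (1 - w • r) =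
      1 - u • p - v • q - w • r + (u * v) • (p * q) + (u * w) • (p * r) + (v * w) • (q * r)
        - (u * v * w) • (p * q * r) := by
  simp only [sub_mul, mul_sub, one_mul, mul_one, smul_mul_assoc, mul_smul_comm, smul_sub]
  module

lemma yang_baxter (hc : Function.Injective c) {a b d : ι} (hab : a ≠ b) (had : a ≠ d)
    (hbd : b ≠ d) :
    ybFactor P c a b * ybFactor P c a d * ybFactor P c b d =
      ybFactor P c b d * ybFactor P c a d * ybFactor P c a b := by
  have swap_mul_swap : swap a b * swap a d = swap a d * swap b d ∧
      swap a b * swap a d = swap b d * swap a b ∧ swap a b * swap b d = swap a d * swap a b ∧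
      swap a b * swap b d = swap b d * swap a d := by
    refine ⟨?_, ?_, ?_, ?_⟩ <;>
    · ext x
      simp only [Perm.mul_apply, swap_apply_def]
      grind
  obtain ⟨pq_eq_qr, pq_eq_rp, pr_eq_qp, pr_eq_rq⟩ := swap_mul_swap
  replace pq_eq_qr := congrArg P pq_eq_qr
  replace pq_eq_rp := congrArg P pq_eq_rp
  replace pr_eq_qp := congrArg P pr_eq_qp
  replace pr_eq_rq := congrArg P pr_eq_rq
  simp only [map_mul] at pq_eq_qr pq_eq_rp pr_eq_qp pr_eq_rq
  have hu : c a - c b ≠ 0 := sub_ne_zero.2 (hc.ne hab)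
  have hv : c a - c d ≠ 0 := sub_ne_zero.2 (hc.ne had)
  have hw : c b - c d ≠ 0 := sub_ne_zero.2 (hc.ne hbd)
  have partial_fractions : (c a - c b)⁻¹ * (c a - c d)⁻¹ + (c a - c d)⁻¹ * (c b - c d)⁻¹ =
      (c a - c b)⁻¹ * (c b - c d)⁻¹ := by
    field_simp
    ring
  unfold ybFactor
  generalize (c a - c b)⁻¹ = u at *
  generalize (c a - c d)⁻¹ = v at *
  generalize (c b - c d)⁻¹ = w at *
  generalize P (swap a b) = p at *
  generalize P (swap a d) = q at *
  generalize P (swap b d) = r at *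
  have pqr_eq_rqp : p * q * r = r * q * p := by rw [pq_eq_rp, mul_assoc, pr_eq_qp, mul_assoc]
  rw [one_sub_smul_mul_three, one_sub_smul_mul_three, pqr_eq_rqp, ← pq_eq_qr, ← pq_eq_rp,
    ← pr_eq_qp, ← pr_eq_rq]
  match_scalars
  any_goals ring1
  · linear_combination partial_fractions
  · linear_combination -partial_fractions

lemma commute_ybFactor {a b d e : ι} (had : a ≠ d) (hae : a ≠ e) (hbd : b ≠ d) (hbe : b ≠ e) :
    Commute (ybFactor P c a b) (ybFactor P c d e) := by
  have disjoint_swap : Perm.Disjoint (swap a b) (swap d e) := by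
    intro x
    simp only [swap_apply_def]
    grind
  have h : Commute (P (swap a b)) (P (swap d e)) := disjoint_swap.commute.map P
  exact (Commute.one_left _).sub_left
    (((Commute.one_right _).sub_right (h.smul_right _)).smul_left _)

lemma commute_ybFactor_ybRow {a b d : ι} {L : List ι} (had : a ≠ d) (hbd : b ≠ d)
    (ha : a ∉ L) (hb : b ∉ L) : Commute (ybFactor P c a b) (ybRow P c d L) := by
  refine Commute.list_prod_right _ _ fun x hx => ?_
  obtain ⟨e, he, rfl⟩ := List.mem_map.1 hx
  exact commute_ybFactor had (ne_of_mem_of_not_mem he ha).symm hbd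
    (ne_of_mem_of_not_mem he hb).symm

lemma commute_ybFactor_fusionProd {a b : ι} {L : List ι} (ha : a ∉ L) (hb : b ∉ L) :
    Commute (ybFactor P c a b) (fusionProd P c L) := by
  induction L with
  | nil => exact Commute.one_right _
  | cons d L ih =>
    simp only [List.mem_cons, not_or] at ha hb
    exact (commute_ybFactor_ybRow ha.1 hb.1 ha.2 hb.2).mul_right (ih ha.2 hb.2)

lemma commute_ybRow_fusionProd {a : ι} {L M : List ι} (ha : a ∉ M) (hLM : L.Disjoint M) :
    Commute (ybRow P c a L) (fusionProd P c M) := by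
  refine Commute.list_prod_left _ _ fun x hx => ?_
  obtain ⟨e, he, rfl⟩ := List.mem_map.1 hx
  exact commute_ybFactor_fusionProd ha (hLM he)

lemma ybFactor_mul_ybRow_mul_ybRow (hc : Function.Injective c) {a b : ι} (hab : a ≠ b)
    {L : List ι} (hL : L.Nodup) (ha : a ∉ L) (hb : b ∉ L) :
    ybFactor P c a b * ybRow P c a L * ybRow P c b L =
      ybRow P c b L * ybRow P c a L * ybFactor P c a b := by
  induction L with
  | nil => simp
  | cons d L ih =>
    simp only [List.mem_cons, not_or] at ha hb
    rw [List.nodup_cons] at hL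
    have comm_row_a : Commute (ybFactor P c b d) (ybRow P c a L) :=
      commute_ybFactor_ybRow hab.symm (Ne.symm ha.1) hb.2 hL.1
    have comm_row_b : Commute (ybFactor P c a d) (ybRow P c b L) :=
      commute_ybFactor_ybRow hab (Ne.symm hb.1) ha.2 hL.1
    simp only [ybRow_cons]
    calc _ = ybFactor P c a b * ybFactor P c a d * (ybRow P c a L * ybFactor P c b d)
          * ybRow P c b L := by simp only [mul_assoc]
      _ = (ybFactor P c a b * ybFactor P c a d * ybFactor P c b d) * (ybRow P c a L
          * ybRow P c b L) := by rw [← comm_row_a.eq]; simp only [mul_assoc]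
      _ = ybFactor P c b d * ybFactor P c a d * (ybFactor P c a b * ybRow P c a L
          * ybRow P c b L) := by rw [yang_baxter hc hab ha.1 hb.1]; simp only [mul_assoc]
      _ = ybFactor P c b d * (ybFactor P c a d * ybRow P c b L) * ybRow P c a L
          * ybFactor P c a b := by rw [ih hL.2 ha.2 hb.2]; simp only [mul_assoc]
      _ = _ := by rw [comm_row_b.eq]; simp only [mul_assoc]

lemma ybRow_mul_fusionProd (hc : Function.Injective c) {a : ι} {L : List ι} (hL : L.Nodup)
    (ha : a ∉ L) :
    ybRow P c a L * fusionProd P c L = fusionProd P c L * ybRow P c a L.reverse := by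
  induction L with
  | nil => simp
  | cons d L ih =>
    simp only [List.mem_cons, not_or] at ha
    rw [List.nodup_cons] at hL
    have h_comm : Commute (ybFactor P c a d) (fusionProd P c L) :=
      commute_ybFactor_fusionProd ha.2 hL.1
    simp only [ybRow_cons, fusionProd_cons, List.reverse_cons, ybRow_append, ybRow_nil, mul_one]
    calc _ = (ybFactor P c a d * ybRow P c a L * ybRow P c d L) * fusionProd P c L := by
          simp only [mul_assoc]
      _ = ybRow P c d L * ybRow P c a L * (ybFactor P c a d * fusionProd P c L) := by
          rw [ybFactor_mul_ybRow_mul_ybRow hc ha.1 hL.2 ha.2 hL.1]; simp only [mul_assoc]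
      _ = ybRow P c d L * (ybRow P c a L * fusionProd P c L) * ybFactor P c a d := by
          rw [h_comm.eq]; simp only [mul_assoc]
      _ = _ := by rw [ih hL.2 ha.2]; simp only [mul_assoc]

lemma star_fusionProd [StarRing K] [StarRing E] [StarModule K E]
    (hP : ∀ σ, star (P σ) = P σ⁻¹) (hc_star : ∀ a, star (c a) = c a)
    (hc : Function.Injective c) {L : List ι} (hL : L.Nodup) :
    star (fusionProd P c L) = fusionProd P c L := by
  have star_ybFactor (a b : ι) : star (ybFactor P c a b) = ybFactor P c a b := by
    simp [ybFactor, hP, hc_star]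
  have star_ybRow (a : ι) (L : List ι) : star (ybRow P c a L) = ybRow P c a L.reverse := by
    induction L with
    | nil => simp
    | cons d L ih => simp [ybRow_append, ih, star_ybFactor]
  induction L with
  | nil => simp
  | cons d L ih =>
    rw [List.nodup_cons] at hL
    rw [fusionProd_cons, star_mul, star_ybRow, ih hL.2, ybRow_mul_fusionProd hc hL.2 hL.1]

lemma isUnit_ybFactor {a b : ι} (h : (c a - c b) ^ 2 ≠ 1) : IsUnit (ybFactor P c a b) := by
  obtain ⟨z, hz⟩ : ∃ z, (c a - c b)⁻¹ = z := ⟨_, rfl⟩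
  have hz1 : 1 - z ^ 2 ≠ 0 := by
    rwa [← hz, inv_pow, sub_ne_zero, ne_comm, Ne, inv_eq_one]
  have swap_sq : P (swap a b) * P (swap a b) = 1 := by
    rw [← map_mul, swap_mul_self, map_one]
  have one_sub_mul_one_add : (1 - z • P (swap a b)) * (1 + z • P (swap a b)) = (1 - z ^ 2) • 1 := by
    simp only [sub_mul, mul_add, mul_one, one_mul, smul_mul_assoc, mul_smul_comm, swap_sq]
    module
  have one_add_mul_one_sub : (1 + z • P (swap a b)) * (1 - z • P (swap a b)) = (1 - z ^ 2) • 1 := by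
    simp only [add_mul, mul_sub, mul_one, one_mul, smul_mul_assoc, mul_smul_comm, swap_sq]
    module
  rw [ybFactor, hz]
  refine ⟨⟨_, (1 - z ^ 2)⁻¹ • (1 + z • P (swap a b)), ?_, ?_⟩, rfl⟩
  · rw [mul_smul_comm, one_sub_mul_one_add, inv_smul_smul₀ hz1]
  · rw [smul_mul_assoc, one_add_mul_one_sub, inv_smul_smul₀ hz1]

lemma isUnit_ybRow {a : ι} {L : List ι} (h : ∀ b ∈ L, (c a - c b) ^ 2 ≠ 1) :
    IsUnit (ybRow P c a L) := by
  induction L with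
  | nil => exact isUnit_one
  | cons b L ih =>
    rw [List.forall_mem_cons] at h
    rw [ybRow_cons]
    exact (isUnit_ybFactor h.1).mul (ih h.2)

lemma ybFactor_mul_ybRow_append_swap (hc : Function.Injective c) {a b d : ι} {J L : List ι}
    (h : (d :: (J ++ a :: b :: L)).Nodup) :
    ybFactor P c b a * ybRow P c d (J ++ a :: b :: L) =
      ybRow P c d (J ++ b :: a :: L) * ybFactor P c b a := by
  simp only [List.nodup_cons, List.nodup_append', List.mem_append, List.mem_cons,
    List.disjoint_cons_right, not_or] at h
  obtain ⟨⟨-, hda, hdb, -⟩, -, ⟨⟨hab, haL⟩, hbL, -⟩, haK, hbK, -⟩ := h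
  have comm_J : Commute (ybFactor P c b a) (ybRow P c d J) :=
    commute_ybFactor_ybRow (Ne.symm hdb) (Ne.symm hda) hbK haK
  have comm_L : Commute (ybFactor P c b a) (ybRow P c d L) :=
    commute_ybFactor_ybRow (Ne.symm hdb) (Ne.symm hda) hbL haL
  simp only [ybRow_append, ybRow_cons]
  calc _ = ybRow P c d J * (ybFactor P c b a * ybFactor P c d a * ybFactor P c d b) *
        ybRow P c d L := by rw [← mul_assoc, comm_J.eq]; simp only [mul_assoc]
    _ = ybRow P c d J * (ybFactor P c d b * ybFactor P c d a * ybFactor P c b a) *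
        ybRow P c d L := by rw [yang_baxter hc hdb hda (Ne.symm hab)]
    _ = _ := by simp only [mul_assoc, comm_L.eq]

lemma ybFactor_mul_fusionProd_swap (hc : Function.Injective c) {a b : ι} {J L : List ι}
    (h : (J ++ a :: b :: L).Nodup) :
    ybFactor P c b a * fusionProd P c (J ++ a :: b :: L) =
      fusionProd P c (J ++ b :: a :: L) * ybFactor P c a b := by
  induction J with
  | nil =>
    simp only [List.nil_append, List.nodup_cons, List.mem_cons, not_or] at h
    obtain ⟨⟨hab, haL⟩, hbL, hL⟩ := h
    have h_comm : Commute (ybFactor P c a b) (fusionProd P c L) :=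
      commute_ybFactor_fusionProd haL hbL
    simp only [List.nil_append, fusionProd_cons, ybRow_cons]
    calc _ = ybFactor P c b a * (ybFactor P c a b * ybRow P c a L * ybRow P c b L) *
          fusionProd P c L := by simp only [mul_assoc]
      _ = ybFactor P c b a * (ybRow P c b L * ybRow P c a L * ybFactor P c a b) *
          fusionProd P c L := by rw [ybFactor_mul_ybRow_mul_ybRow hc hab hL haL hbL]
      _ = _ := by simp only [mul_assoc, h_comm.eq]
  | cons d J ih =>
    rw [List.cons_append, List.cons_append, fusionProd_cons, fusionProd_cons, ← mul_assoc,
      ybFactor_mul_ybRow_append_swap hc h, mul_assoc, ih (List.nodup_cons.1 h).2, mul_assoc]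

lemma biAssociated_fusionProd_swap (hc : Function.Injective c) {a b : ι} {J L : List ι}
    (h : (J ++ a :: b :: L).Nodup) (hab : (c a - c b) ^ 2 ≠ 1) :
    BiAssociated (fusionProd P c (J ++ a :: b :: L)) (fusionProd P c (J ++ b :: a :: L)) := by
  obtain ⟨v, hv⟩ := isUnit_ybFactor (P := P) hab
  obtain ⟨u, hu⟩ := isUnit_ybFactor (P := P) (c := c) (a := b) (b := a) (by rwa [sub_sq_comm])
  exact ⟨u, v, by rw [hu, hv, ybFactor_mul_fusionProd_swap hc h]⟩

lemma biAssociated_fusionProd_move (hc : Function.Injective c) {a : ι} {J L M : List ι}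
    (h : (J ++ a :: (L ++ M)).Nodup) (hfar : ∀ b ∈ L, (c a - c b) ^ 2 ≠ 1) :
    BiAssociated (fusionProd P c (J ++ a :: (L ++ M)))
      (fusionProd P c (J ++ (L ++ a :: M))) := by
  induction L generalizing J with
  | nil => exact BiAssociated.refl _
  | cons b L ih =>
    rw [List.forall_mem_cons] at hfar
    have h_swapped : (J ++ [b] ++ a :: (L ++ M)).Nodup := by
      rw [List.append_assoc]
      exact ((List.Perm.swap _ _ _).append_left J).nodup_iff.1 h
    refine (biAssociated_fusionProd_swap hc h hfar.1).trans ?_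
    simpa using ih h_swapped hfar.2

lemma biAssociated_fusionProd_filter (hc : Function.Injective c) (p : ι → Bool) {J L : List ι}
    (h : (J ++ L).Nodup) (hfar : ∀ a ∈ L, ∀ b ∈ L, p a → !p b → (c a - c b) ^ 2 ≠ 1) :
    BiAssociated (fusionProd P c (J ++ L))
      (fusionProd P c (J ++ (L.filter p ++ L.filter (!p ·)))) := by
  induction L generalizing J with
  | nil => exact BiAssociated.refl _
  | cons a L ih =>
    have ih' := ih (J := J ++ [a]) (by simpa using h) fun x hx y hy =>
      hfar x (List.mem_cons_of_mem a hx) y (List.mem_cons_of_mem a hy)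
    simp only [List.append_assoc, List.singleton_append] at ih'
    refine ih'.trans ?_
    rcases ha : p a with _ | _
    · simp only [List.filter_cons, ha, Bool.not_false, if_true, Bool.false_eq_true, if_false]
      refine biAssociated_fusionProd_move (P := P) hc ?_ fun b hb => ?_
      · exact (((List.filter_append_perm p L).cons a).append_left J).nodup_iff.2 h
      · obtain ⟨hbL, hb⟩ := List.mem_filter.1 hb
        have := hfar b (List.mem_cons_of_mem a hbL) a List.mem_cons_self hb (by simp [ha])
        rwa [sub_sq_comm]
    · simp only [List.filter_cons, ha, Bool.not_true, if_true, Bool.false_eq_true, if_false]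
      exact BiAssociated.refl _

lemma exists_fusionProd_append_eq (hc : Function.Injective c) {L M : List ι}
    (h : (L ++ M).Nodup) (hfar : ∀ a ∈ L, ∀ b ∈ M, (c a - c b) ^ 2 ≠ 1) :
    ∃ w : Eˣ, fusionProd P c (L ++ M) = fusionProd P c L * fusionProd P c M * w := by
  induction L with
  | nil => exact ⟨1, by simp⟩
  | cons a L ih =>
    rw [List.forall_mem_cons] at hfar
    rw [List.cons_append, List.nodup_cons, List.mem_append, not_or] at h
    obtain ⟨⟨haL, haM⟩, hLM⟩ := h
    obtain ⟨-, hM, hdisj⟩ := List.nodup_append'.1 hLM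
    obtain ⟨w, hw⟩ := ih hLM hfar.2
    obtain ⟨r, hr⟩ := isUnit_ybRow (P := P) (c := c) (a := a) (L := M.reverse)
      (by simpa using hfar.1)
    have h_comm : Commute (ybRow P c a M) (fusionProd P c L) :=
      commute_ybRow_fusionProd haL hdisj.symm
    refine ⟨r * w, ?_⟩
    calc _ = ybRow P c a L * (ybRow P c a M * fusionProd P c L) * fusionProd P c M * w := by
          rw [List.cons_append, fusionProd_cons, ybRow_append, hw]; simp only [mul_assoc]
      _ = ybRow P c a L * fusionProd P c L * (ybRow P c a M * fusionProd P c M) * w := by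
          rw [h_comm.eq]; simp only [mul_assoc]
      _ = _ := by
          rw [ybRow_mul_fusionProd hc hM haM, fusionProd_cons, Units.val_mul, hr]
          simp only [mul_assoc]

lemma biAssociated_fusionProd_cons (hc : Function.Injective c) (p : ι → Bool) {o : ι}
    {L : List ι} (h : (o :: L).Nodup)
    (hfar : ∀ a ∈ L, ∀ b ∈ L, p a → !p b → (c a - c b) ^ 2 ≠ 1) :
    BiAssociated (fusionProd P c (o :: L))
      (fusionProd P c (o :: L.filter p) * fusionProd P c (o :: L.filter (!p ·))) := by
  refine (biAssociated_fusionProd_filter (J := [o]) hc p h hfar).trans ?_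
  have h_parts := ((List.filter_append_perm p L).cons o).nodup_iff.2 h
  rw [List.nodup_cons, List.mem_append, not_or] at h_parts
  obtain ⟨⟨hoL, -⟩, hLM⟩ := h_parts
  obtain ⟨w, hw⟩ := exists_fusionProd_append_eq (P := P) hc hLM fun a ha b hb =>
    hfar a (List.mem_of_mem_filter ha) b (List.mem_of_mem_filter hb)
      (List.mem_filter.1 ha).2 (List.mem_filter.1 hb).2
  have h_comm : Commute (ybRow P c o (L.filter (!p ·))) (fusionProd P c (L.filter p)) :=
    commute_ybRow_fusionProd hoL (List.nodup_append'.1 hLM).2.2.symm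
  have split : fusionProd P c (o :: (L.filter p ++ L.filter (!p ·))) =
      fusionProd P c (o :: L.filter p) * fusionProd P c (o :: L.filter (!p ·)) * w := by
    calc _ = ybRow P c o (L.filter p) * (ybRow P c o (L.filter (!p ·)) *
          fusionProd P c (L.filter p)) * fusionProd P c (L.filter (!p ·)) * w := by
          rw [fusionProd_cons, ybRow_append, hw]; simp only [mul_assoc]
      _ = _ := by rw [h_comm.eq]; simp only [fusionProd_cons, mul_assoc]
  rw [List.singleton_append, split]
  exact BiAssociated.mul_unit _ w

lemma ybRow_mul_eq_add_smul_sum [CharZero K] {a : ι} {L : List ι} {h : E} (s : ℕ)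
    (haL : (a :: L).Nodup) (hhead : ∀ b ∈ L.head?, c b = c a + (s + 1))
    (hL : L.IsChain fun a b => c b = c a + 1)
    (hh : ∀ i ∈ L, ∀ j ∈ L, P (swap i j) * h = h) :
    ybRow P c a L * h = h + ((s : K) + 1)⁻¹ • ∑ i ∈ L.toFinset, P (swap a i) * h := by
  induction L generalizing s with
  | nil => simp
  | cons b L ih =>
    obtain ⟨hab, haL, hbL, hL'⟩ : a ≠ b ∧ a ∉ L ∧ b ∉ L ∧ L.Nodup := by simpa [and_assoc] using haL
    rw [List.isChain_cons] at hL
    have hb : c b = c a + (s + 1) := hhead b rfl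
    have hs1 : (s : K) + 1 ≠ 0 := s.cast_add_one_ne_zero
    have hs2 : (s : K) + 1 + 1 ≠ 0 := by exact_mod_cast (s + 1).cast_add_one_ne_zero (R := K)
    have ih' := ih (s + 1) (List.nodup_cons.2 ⟨haL, hL'⟩)
      (fun d hd => by rw [hL.1 d hd, hb]; push_cast; ring) hL.2
      fun i hi j hj => hh i (List.mem_cons_of_mem b hi) j (List.mem_cons_of_mem b hj)
    have absorb : ∑ i ∈ L.toFinset, P (swap a b) * (P (swap a i) * h) =
        ∑ i ∈ L.toFinset, P (swap a i) * h := by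
      refine Finset.sum_congr rfl fun i hi => ?_
      rw [List.mem_toFinset] at hi
      have swap_mul_swap : swap a i * swap b i = swap a b * swap a i := by
        rw [mul_swap_eq_swap_mul, swap_apply_right, swap_comm a b,
          swap_apply_of_ne_of_ne hab.symm (ne_of_mem_of_not_mem hi hbL).symm]
      rw [← mul_assoc, ← map_mul, ← swap_mul_swap, map_mul, mul_assoc,
        hh b List.mem_cons_self i (List.mem_cons_of_mem b hi)]
    have hd : c a - c b = -((s : K) + 1) := by rw [hb]; ring
    rw [ybRow_cons, mul_assoc, ih', ybFactor, hd, sub_mul, one_mul, smul_mul_assoc, mul_add,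
      mul_smul_comm, Finset.mul_sum, absorb, List.toFinset_cons,
      Finset.sum_insert (by simpa using hbL)]
    push_cast
    generalize ∑ i ∈ L.toFinset, P (swap a i) * h = S
    match_scalars <;> field_simp
    ring
end Fusion

section Symmetrizer

open Equiv

variable {ι E : Type*} [DecidableEq ι] [Fintype ι]

lemma support_swap_subset {s : Finset ι} {a b : ι} (ha : a ∈ s) (hb : b ∈ s) :
    (swap a b).support ⊆ s := by
  rcases eq_or_ne a b with rfl | hab
  · simp
  · simp [Perm.support_swap hab, Finset.insert_subset_iff, ha, hb]

lemma support_mul_subset {s : Finset ι} {σ τ : Perm ι} (hσ : σ.support ⊆ s)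
    (hτ : τ.support ⊆ s) : (σ * τ).support ⊆ s :=
  (Perm.support_mul_le σ τ).trans (sup_le hσ hτ)

/-- The sum of the images `P σ` of the permutations `σ` moving only points of `s`. -/
def symmetrizer [Semiring E] (P : Perm ι →* E) (s : Finset ι) : E :=
  ∑ σ : Perm ι with σ.support ⊆ s, P σ

/-- The twist of a representation of a symmetric group by the sign character. -/
def signTwist [Ring E] (P : Perm ι →* E) : Perm ι →* E where
  toFun σ := Perm.sign σ • P σ
  map_one' := by simp
  map_mul' σ τ := by simp [smul_mul_smul_comm]

/-- The Young symmetrizer of a hook: `R` holds the entries of the only row, and `C` those of the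
only column, with more than one node. -/
def youngSymmetrizer [Ring E] (P : Perm ι →* E) (R C : Finset ι) : E :=
  symmetrizer P R * symmetrizer (signTwist P) C

section Semiring

variable [Semiring E] (P : Perm ι →* E) {s : Finset ι}

lemma map_mul_symmetrizer {σ : Perm ι} (hσ : σ.support ⊆ s) :
    P σ * symmetrizer P s = symmetrizer P s := by
  simp only [symmetrizer, Finset.mul_sum, ← map_mul]
  refine Finset.sum_equiv (Equiv.mulLeft σ) (fun τ => ?_) fun τ _ => rfl
  simp only [Finset.mem_filter_univ, Equiv.coe_mulLeft]
  refine ⟨support_mul_subset hσ, fun h => ?_⟩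
  simpa using support_mul_subset (σ := σ⁻¹) (by simpa using hσ) h

lemma symmetrizer_mul_map {σ : Perm ι} (hσ : σ.support ⊆ s) :
    symmetrizer P s * P σ = symmetrizer P s := by
  simp only [symmetrizer, Finset.sum_mul, ← map_mul]
  refine Finset.sum_equiv (Equiv.mulRight σ) (fun τ => ?_) fun τ _ => rfl
  simp only [Finset.mem_filter_univ, Equiv.coe_mulRight]
  refine ⟨fun h => support_mul_subset h hσ, fun h => ?_⟩
  simpa using support_mul_subset (τ := σ⁻¹) h (by simpa using hσ)

lemma symmetrizer_empty : symmetrizer P ∅ = 1 := by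
  simp [symmetrizer, Finset.sum_filter]

lemma symmetrizer_insert {a : ι} (ha : a ∉ s) :
    symmetrizer P (insert a s) = ∑ i ∈ insert a s, P (swap a i) * symmetrizer P s := by
  simp only [symmetrizer, Finset.mul_sum, ← map_mul, ← Finset.sum_product']
  refine Finset.sum_nbij' (fun σ => (σ a, swap a (σ a) * σ)) (fun p => swap a p.1 * p.2) ?_ ?_
    (fun σ _ => by simp) ?_ (fun σ _ => by simp)
  · intro σ hσ
    rw [Finset.mem_filter_univ] at hσ
    have hσa : σ a ∈ insert a s := by
      by_cases h : σ a = a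
      · simp [h]
      · exact hσ (Perm.apply_mem_support.2 (Perm.mem_support.2 h))
    refine Finset.mk_mem_product hσa ?_
    rw [Finset.mem_filter_univ, ← Finset.erase_insert ha, Finset.subset_erase]
    exact ⟨support_mul_subset (support_swap_subset (Finset.mem_insert_self a s) hσa) hσ, by simp⟩
  · rintro ⟨i, τ⟩ h
    simp only [Finset.mem_product, Finset.mem_filter_univ] at h ⊢
    exact support_mul_subset (support_swap_subset (Finset.mem_insert_self a s) h.1)
      (h.2.trans (Finset.subset_insert a s))
  · rintro ⟨i, τ⟩ h
    simp only [Finset.mem_product, Finset.mem_filter_univ] at h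
    have hτa : τ a = a := Perm.notMem_support.1 fun h' => ha (h.2 h')
    simp [hτa]

lemma conj_symmetrizer (ρ : Perm ι) :
    P ρ * symmetrizer P s * P ρ⁻¹ = symmetrizer P (s.map ρ.toEmbedding) := by
  simp only [symmetrizer, Finset.mul_sum, Finset.sum_mul, ← map_mul]
  refine Finset.sum_equiv (MulAut.conj ρ).toEquiv (fun τ => ?_) fun τ _ => by simp
  simp [Perm.support_conj, Finset.map_subset_map]

lemma map_symmetrizer {F E' : Type*} [Semiring E'] [FunLike F E E'] [RingHomClass F E E']
    (φ : F) : φ (symmetrizer P s) = symmetrizer ((φ : E →* E').comp P) s := by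
  simp [symmetrizer]

end Semiring

section Ring

variable [Ring E] (P : Perm ι →* E) {R C : Finset ι}

lemma signTwist_apply (σ : Perm ι) : signTwist P σ = Perm.sign σ • P σ := rfl

lemma map_youngSymmetrizer {F E' : Type*} [Ring E'] [FunLike F E E'] [RingHomClass F E E']
    (φ : F) : φ (youngSymmetrizer P R C) = youngSymmetrizer ((φ : E →* E').comp P) R C := by
  have comp_signTwist : (φ : E →* E').comp (signTwist P) = signTwist ((φ : E →* E').comp P) := by
    ext σ
    simp [signTwist_apply, Units.smul_def]
  rw [youngSymmetrizer, map_mul, map_symmetrizer, map_symmetrizer, comp_signTwist,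
    youngSymmetrizer]

lemma conj_youngSymmetrizer (ρ : Perm ι) :
    P ρ * youngSymmetrizer P R C * P ρ⁻¹ =
      youngSymmetrizer P (R.map ρ.toEmbedding) (C.map ρ.toEmbedding) := by
  have sign_cancel (x : E) : P ρ * x * P ρ⁻¹ = signTwist P ρ * x * signTwist P ρ⁻¹ := by
    simp only [signTwist_apply, Perm.sign_inv, smul_mul_assoc, mul_smul_comm, smul_smul,
      Int.units_mul_self, one_smul]
  have inv_mul : P ρ⁻¹ * P ρ = 1 := by rw [← map_mul, inv_mul_cancel, map_one]
  calc _ = P ρ * symmetrizer P R * (P ρ⁻¹ * P ρ) * symmetrizer (signTwist P) C * P ρ⁻¹ := by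
        rw [inv_mul, mul_one, youngSymmetrizer]; simp only [mul_assoc]
    _ = P ρ * symmetrizer P R * P ρ⁻¹ * (P ρ * symmetrizer (signTwist P) C * P ρ⁻¹) := by
        simp only [mul_assoc]
    _ = _ := by rw [conj_symmetrizer, sign_cancel, conj_symmetrizer, youngSymmetrizer]

lemma exists_mul_of_mapsTo {τ : Perm ι} (hτ : ∀ x ∈ C, τ x ∈ C) :
    ∃ d c : Perm ι, Disjoint d.support C ∧ c.support ⊆ C ∧ τ = d * c := by
  let c := Perm.ofSubtype (τ.subtypePermOfFintype hτ)
  have c_apply {x : ι} (hx : x ∈ C) : c x = τ x :=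
    Perm.ofSubtype_apply_of_mem (τ.subtypePermOfFintype hτ) hx
  have apply_inv (x : ι) : c (c⁻¹ x) = x := c.apply_symm_apply x
  have c_inv_mem {x : ι} (hx : x ∈ C) : c⁻¹ x ∈ C := by
    by_contra h
    have fixed : c (c⁻¹ x) = c⁻¹ x := Perm.ofSubtype_apply_of_not_mem _ h
    rw [apply_inv] at fixed
    exact h (fixed ▸ hx)
  refine ⟨τ * c⁻¹, c, Finset.disjoint_right.2 fun x hx => ?_, fun x hx => ?_, by simp⟩
  · rw [Perm.notMem_support, Perm.mul_apply, ← c_apply (c_inv_mem hx), apply_inv]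
  · by_contra h
    exact Perm.mem_support.1 hx (Perm.ofSubtype_apply_of_not_mem _ h)

/-- Von Neumann's combinatorial lemma for a hook with row `R` and column `C`. -/
lemma exists_mul_or_exists_ne (hRC : R ∪ C = Finset.univ)
    (ho : Nonempty ι → (R ∩ C).Nonempty) (σ : Perm ι) :
    (∃ r c : Perm ι, r.support ⊆ R ∧ c.support ⊆ C ∧ σ = r * c) ∨
      ∃ i ∈ C, ∃ j ∈ C, i ≠ j ∧ σ i ∈ R ∧ σ j ∈ R := by
  have mem_or (x : ι) : x ∈ R ∨ x ∈ C := by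
    rw [← Finset.mem_union, hRC]
    exact Finset.mem_univ x
  have subset_R {d : Perm ι} (hd : Disjoint d.support C) : d.support ⊆ R := fun x hx =>
    (mem_or x).resolve_right (Finset.disjoint_left.1 hd hx)
  by_cases hσ : ∃ j ∈ C, σ j ∈ R
  · obtain ⟨j, hj, hσj⟩ := hσ
    refine or_iff_not_imp_right.2 fun h => ?_
    push Not at h
    obtain ⟨o, ho⟩ := ho ⟨j⟩
    obtain ⟨hoR, hoC⟩ := Finset.mem_inter.1 ho
    have mapsTo (x : ι) (hx : x ∈ C) : (swap o (σ j) * σ) x ∈ C := by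
      rcases eq_or_ne x j with rfl | hxj
      · simpa using hoC
      · have hσx := h j hj x hx hxj.symm hσj
        rw [Perm.mul_apply, swap_apply_of_ne_of_ne (ne_of_mem_of_not_mem hoR hσx).symm
          (σ.injective.ne hxj)]
        exact (mem_or _).resolve_left hσx
    obtain ⟨d, c, hd, hc, e⟩ := exists_mul_of_mapsTo mapsTo
    exact ⟨swap o (σ j) * d, c, support_mul_subset (support_swap_subset hoR hσj) (subset_R hd),
      hc, by rw [mul_assoc, ← e, swap_mul_self_mul]⟩
  · push Not at hσ
    obtain ⟨d, c, hd, hc, e⟩ :=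
      exists_mul_of_mapsTo fun x hx => (mem_or _).resolve_left (hσ x hx)
    exact .inl ⟨d, c, subset_R hd, hc, e⟩

lemma exists_symmetrizer_mul_map_mul_eq_smul [IsAddTorsionFree E]
    (hRC : R ∪ C = Finset.univ) (ho : Nonempty ι → (R ∩ C).Nonempty)
    (σ : Perm ι) :
    ∃ k : ℤ, symmetrizer P R * P σ * symmetrizer (signTwist P) C = k • youngSymmetrizer P R C := by
  have map_mul_antisymmetrizer {c : Perm ι} (hc : c.support ⊆ C) :
      P c * symmetrizer (signTwist P) C = Perm.sign c • symmetrizer (signTwist P) C := by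
    conv_rhs => rw [← map_mul_symmetrizer (signTwist P) hc]
    rw [signTwist_apply, smul_mul_assoc, smul_smul, Int.units_mul_self, one_smul]
  rcases exists_mul_or_exists_ne hRC ho σ with ⟨r, c, hr, hc, rfl⟩ | ⟨i, hi, j, hj, hij, hσi, hσj⟩
  · refine ⟨Perm.sign c, ?_⟩
    rw [map_mul, ← mul_assoc, symmetrizer_mul_map P hr, mul_assoc, map_mul_antisymmetrizer hc,
      mul_smul_comm, Units.smul_def, youngSymmetrizer]
  · refine ⟨0, ?_⟩
    have hswap : swap (σ i) (σ j) * σ = σ * swap i j := by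
      rw [swap_apply_apply, inv_mul_cancel_right]
    have eq_neg : symmetrizer P R * P σ * symmetrizer (signTwist P) C =
        -(symmetrizer P R * P σ * symmetrizer (signTwist P) C) := by
      nth_rewrite 1 [← symmetrizer_mul_map P (support_swap_subset hσi hσj)]
      rw [mul_assoc (symmetrizer P R), ← map_mul, hswap, map_mul, ← mul_assoc, mul_assoc,
        map_mul_antisymmetrizer (support_swap_subset hi hj), Perm.sign_swap hij, Units.neg_smul,
        one_smul, mul_neg]
    rw [zero_smul]
    exact self_eq_neg.1 eq_neg

end Ring

lemma hasScalarCorner_youngSymmetrizer {K : Type*} [Field K] [CharZero K]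
    {R C : Finset ι} (hRC : R ∪ C = Finset.univ) (ho : Nonempty ι → (R ∩ C).Nonempty) :
    HasScalarCorner K (youngSymmetrizer (MonoidAlgebra.of K (Perm ι)) R C) := by
  set P := MonoidAlgebra.of K (Perm ι)
  have : IsAddTorsionFree (MonoidAlgebra K (Perm ι)) := .of_isTorsionFree K _
  have key (x : MonoidAlgebra K (Perm ι)) : ∃ k : K,
      symmetrizer P R * x * symmetrizer (signTwist P) C = k • youngSymmetrizer P R C := by
    induction x using MonoidAlgebra.induction_on with
    | of σ =>
      obtain ⟨k, hk⟩ := exists_symmetrizer_mul_map_mul_eq_smul P hRC ho σ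
      exact ⟨k, by rw [Int.cast_smul_eq_zsmul]; exact hk⟩
    | add x y hx hy =>
      obtain ⟨⟨k, hk⟩, l, hl⟩ := hx, hy
      exact ⟨k + l, by rw [mul_add, add_mul, hk, hl, add_smul]⟩
    | smul r x hx =>
      obtain ⟨k, hk⟩ := hx
      exact ⟨r * k, by rw [mul_smul_comm, smul_mul_assoc, hk, mul_smul]⟩
  intro z
  obtain ⟨k, hk⟩ := key (symmetrizer (signTwist P) C * z * symmetrizer P R)
  exact ⟨k, by rw [← hk, youngSymmetrizer]; simp only [mul_assoc]⟩

section FusionSymmetrizer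

variable {K : Type*} [Field K] [Ring E] [Algebra K E] {P : Perm ι →* E} {c : ι → K} {L : List ι}

lemma fusionProd_signTwist (hL : L.Nodup) :
    fusionProd (signTwist P) (-c) L = fusionProd P c L := by
  have ybFactor_signTwist {a b : ι} (hab : a ≠ b) :
      ybFactor (signTwist P) (-c) a b = ybFactor P c a b := by
    rw [ybFactor, ybFactor, signTwist_apply, Perm.sign_swap hab, Units.neg_smul, one_smul,
      Pi.neg_apply, Pi.neg_apply, ← neg_sub', inv_neg, smul_neg, neg_smul, neg_neg]
  induction L with
  | nil => rfl
  | cons a L ih =>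
    rw [List.nodup_cons] at hL
    rw [fusionProd_cons, fusionProd_cons, ih hL.2, ybRow, ybRow, List.map_congr_left fun b hb =>
      ybFactor_signTwist (ne_of_mem_of_not_mem hb hL.1).symm]

variable [CharZero K]

lemma fusionProd_eq_symmetrizer (hL : L.Nodup) (hcL : L.IsChain fun a b => c b = c a + 1) :
    fusionProd P c L = symmetrizer P L.toFinset := by
  induction L with
  | nil => simp [symmetrizer_empty]
  | cons a L ih =>
    have haL := (List.nodup_cons.1 hL).1
    rw [List.isChain_cons] at hcL
    have row := ybRow_mul_eq_add_smul_sum (P := P) (c := c) (h := symmetrizer P L.toFinset) 0 hL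
      (by simpa using hcL.1) hcL.2 fun i hi j hj =>
        map_mul_symmetrizer P (support_swap_subset (by simpa using hi) (by simpa using hj))
    rw [fusionProd_cons, ih (List.nodup_cons.1 hL).2 hcL.2, row, List.toFinset_cons,
      symmetrizer_insert P (by simpa using haL), Finset.sum_insert (by simpa using haL),
      swap_self, ← Perm.one_def, map_one]
    simp

lemma fusionProd_eq_antisymmetrizer (hL : L.Nodup) (hcL : L.IsChain fun a b => c a = c b + 1) :
    fusionProd P c L = symmetrizer (signTwist P) L.toFinset := by
  rw [← fusionProd_signTwist hL, fusionProd_eq_symmetrizer hL]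
  exact hcL.imp fun a b h => by simp [h]

end FusionSymmetrizer

end Symmetrizer

section Commutant

variable {G : Type*} [Group G]

section ConjSum

variable (K : Type*) {E : Type*} [CommSemiring K] [Semiring E] [Algebra K E] (P : G →* E)

variable {K P} in
lemma commute_lift {b : E} (hb : b ∈ Subalgebra.centralizer K (Set.range P))
    (z : MonoidAlgebra K G) : Commute (MonoidAlgebra.lift K E G P z) b := by
  rw [Subalgebra.mem_centralizer_iff, Set.forall_mem_range] at hb
  induction z using MonoidAlgebra.induction_on with
  | of g => rw [MonoidAlgebra.lift_of]; exact hb g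
  | add x y hx hy => rw [map_add]; exact hx.add_left hy
  | smul r x hx => rw [map_smul]; exact hx.smul_left r

variable [Fintype G]

/-- The sum of all conjugates of an element under a representation of a finite group: up to the
factor `|G|`, the projection onto the commutant of the group. -/
def conjSum : E →ₗ[K] E := ∑ g, LinearMap.mulLeftRight K (P g, P g⁻¹)

lemma conjSum_apply (x : E) : conjSum K P x = ∑ g, P g * x * P g⁻¹ := by
  simp [conjSum]

lemma conjSum_conj (g : G) (x : E) : conjSum K P (P g * x * P g⁻¹) = conjSum K P x := by
  simp only [conjSum_apply]
  refine Fintype.sum_equiv (Equiv.mulRight g) _ _ fun h => ?_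
  simp only [Equiv.coe_mulRight, mul_inv_rev, map_mul, mul_assoc]

lemma conjSum_mem_centralizer (x : E) :
    conjSum K P x ∈ Subalgebra.centralizer K (Set.range P) := by
  rw [Subalgebra.mem_centralizer_iff, Set.forall_mem_range]
  intro g
  simp only [conjSum_apply, Finset.mul_sum, Finset.sum_mul]
  refine Fintype.sum_equiv (Equiv.mulLeft g) _ _ fun h => ?_
  have inv_mul : P g⁻¹ * P g = 1 := by rw [← map_mul, inv_mul_cancel, map_one]
  simp only [Equiv.coe_mulLeft, mul_inv_rev, map_mul, mul_assoc, inv_mul, mul_one]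

variable {K P} in
lemma mul_conjSum_mul {F : E} {τ : G → K} (hτ : ∀ g, F * P g * F = τ g • F) (x : E) :
    F * conjSum K P (F * x * F) * F = (∑ g, τ g * τ g⁻¹) • (F * x * F) := by
  simp only [conjSum_apply, Finset.mul_sum, Finset.sum_mul, Finset.sum_smul]
  refine Finset.sum_congr rfl fun g _ => ?_
  calc _ = F * P g * F * x * (F * P g⁻¹ * F) := by simp only [mul_assoc]
    _ = _ := by simp only [hτ, smul_mul_assoc, mul_smul_comm, smul_smul, mul_comm]

variable {K P} {b : E} (hb : b ∈ Subalgebra.centralizer K (Set.range P))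
include hb

lemma conjSum_mul (x : E) : conjSum K P x * b = conjSum K P (x * b) := by
  rw [Subalgebra.mem_centralizer_iff, Set.forall_mem_range] at hb
  simp only [conjSum_apply, Finset.sum_mul, mul_assoc, hb]

lemma conjSum_of_mem_centralizer : conjSum K P b = Fintype.card G • b := by
  have conjSum_one : conjSum K P 1 = Fintype.card G • 1 := by
    simp only [conjSum_apply, mul_one, ← map_mul, mul_inv_cancel, map_one, Finset.sum_const,
      Finset.card_univ]
  rw [← one_mul b, ← conjSum_mul hb, conjSum_one, smul_mul_assoc]

end ConjSum

section Matrix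

variable {m : Type*} [Fintype m]

lemma mulVec_of_mem_range {R : Type*} [CommSemiring R] {F : Matrix m m R} {t : R}
    (hFF : F * F = t • F) {x : m → R} (hx : x ∈ F.mulVecLin.range) : F.mulVec x = t • x := by
  obtain ⟨w, rfl⟩ := hx
  rw [Matrix.mulVecLin_apply, Matrix.mulVec_mulVec, hFF, Matrix.smul_mulVec]

lemma mul_vecMulVec_star_mul {R : Type*} [CommSemiring R] [StarRing R] {F : Matrix m m R} {t : R}
    (hF : star F = F) (hFF : F * F = t • F) (ht : star t = t) {u v : m → R}
    (hu : u ∈ F.mulVecLin.range) (hv : v ∈ F.mulVecLin.range) :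
    F * Matrix.vecMulVec v (star u) * F = (t * t) • Matrix.vecMulVec v (star u) := by
  rw [Matrix.mul_vecMulVec, mulVec_of_mem_range hFF hv, Matrix.vecMulVec_mul, ← hF,
    Matrix.star_eq_conjTranspose, ← Matrix.star_mulVec, mulVec_of_mem_range hFF hu, star_smul, ht,
    Matrix.smul_vecMulVec, Matrix.vecMulVec_smul, smul_smul]

variable [DecidableEq m]

lemma map_range_mulVecLin_of_mul_eq {R : Type*} [CommSemiring R] {F F' : Matrix m m R}
    {u v : (Matrix m m R)ˣ} (h : (u : Matrix m m R) * F = F' * (v : Matrix m m R)) :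
    F.mulVecLin.range.map (u : Matrix m m R).mulVecLin = F'.mulVecLin.range := by
  have hv : Function.Surjective (v : Matrix m m R).mulVecLin := fun x =>
    ⟨(↑v⁻¹ : Matrix m m R).mulVec x, by simp [Matrix.mulVec_mulVec]⟩
  rw [← LinearMap.range_comp, ← Matrix.mulVecLin_mul, h, Matrix.mulVecLin_mul,
    LinearMap.range_comp_of_range_eq_top _ (LinearMap.range_eq_top.2 hv)]

variable {R : Type*} [Field R] [StarRing R] [PartialOrder R] [StarOrderedRing R]
  {P : G →* Matrix m m R} {F : Matrix m m R}

lemma exists_mul_map_mul_eq_smul [Fintype G] (hP : ∀ g, star (P g) = P g⁻¹) (hF : star F = F)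
    (hF0 : F ≠ 0) (hcorner : ∀ g, ∃ k : R, F * P g * F = k • F) :
    ∃ τ : G → R, (∀ g, F * P g * F = τ g • F) ∧ star (τ 1) = τ 1 ∧ τ 1 ≠ 0 ∧
      ∑ g, τ g * τ g⁻¹ ≠ 0 := by
  choose τ hτ using hcorner
  have τ_inv (g : G) : τ g⁻¹ = star (τ g) := smul_left_injective R hF0 <| by
    have := congrArg star (hτ g)
    rwa [star_mul, star_mul, star_smul, hF, hP, ← mul_assoc, hτ] at this
  have hτ1 : τ 1 ≠ 0 := fun h => hF0 <| by
    rw [← Matrix.conjTranspose_mul_self_eq_zero, ← Matrix.star_eq_conjTranspose, hF]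
    simpa [h] using hτ 1
  refine ⟨τ, hτ, by rw [← τ_inv, inv_one], hτ1, ?_⟩
  have hτ0 : τ ≠ 0 := fun h => hτ1 (congrFun h 1)
  simp only [τ_inv, mul_comm (τ _)]
  exact dotProduct_star_self_eq_zero.not.2 hτ0

/-- Summing the conjugates of the rank one operator `k = v u*` over the group gives an element of
the commutant, whose compression by `F` is a nonzero multiple of `k`. -/
lemma exists_mem_centralizer_mulVec_eq [Finite G] (hP : ∀ g, star (P g) = P g⁻¹)
    {f : MonoidAlgebra R G} (hf : HasScalarCorner R f) (hfF : MonoidAlgebra.lift R _ G P f = F)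
    (hF : star F = F) {u v : m → R} (hu : u ∈ F.mulVecLin.range) (hv : v ∈ F.mulVecLin.range)
    (hu0 : u ≠ 0) :
    ∃ b ∈ Subalgebra.centralizer R (Set.range P), b.mulVec u = v := by
  have := Fintype.ofFinite G
  have hF0 : F ≠ 0 := by
    rintro rfl
    obtain ⟨w, rfl⟩ := hu
    simp at hu0
  obtain ⟨τ, hτ, star_τ1, hτ1, sum_ne_zero⟩ := exists_mul_map_mul_eq_smul hP hF hF0 fun g => by
    obtain ⟨k, hk⟩ := hf (MonoidAlgebra.of R G g)
    exact ⟨k, by simpa [hfF] using congrArg (MonoidAlgebra.lift R _ G P) hk⟩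
  have hFF : F * F = τ 1 • F := by simpa using hτ 1
  set k := Matrix.vecMulVec v (star u)
  set b := conjSum R P k
  have hbF : F * b = b * F := by
    rw [← hfF]
    exact commute_lift (conjSum_mem_centralizer R P k) f
  have hFkF : F * k * F = (τ 1 * τ 1) • k := mul_vecMulVec_star_mul hF hFF star_τ1 hu hv
  have hFbF : (F * b * F).mulVec u = (τ 1 * τ 1) • b.mulVec u := by
    rw [hbF, mul_assoc, hFF, ← Matrix.mulVec_mulVec, Matrix.smul_mulVec,
      mulVec_of_mem_range hFF hu, Matrix.mulVec_smul, Matrix.mulVec_smul, smul_smul]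
  obtain ⟨p, q, hq, hpq⟩ : ∃ p q : R, q ≠ 0 ∧ p • b.mulVec u = q • v := by
    have compress := congrArg (Matrix.mulVec · u) (mul_conjSum_mul hτ k)
    simp only [hFkF, map_smul, mul_smul_comm, smul_mul_assoc, Matrix.smul_mulVec] at compress
    rw [hFbF, Matrix.vecMulVec_mulVec, op_smul_eq_smul, smul_smul, smul_smul, smul_smul] at compress
    exact ⟨_, _, mul_ne_zero (mul_ne_zero sum_ne_zero (mul_ne_zero hτ1 hτ1))
      (dotProduct_star_self_eq_zero.not.2 hu0), compress⟩
  refine ⟨(q⁻¹ * p) • b, Subalgebra.smul_mem _ (conjSum_mem_centralizer R P k) _, ?_⟩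
  rw [Matrix.smul_mulVec, mul_smul, hpq, inv_smul_smul₀ hq]

end Matrix

end Commutant

section TensorPower

open Equiv

variable {N n : ℕ}

/-- The representation of the symmetric group on `V^{⊗ n}` by the operators `P_π`. -/
def permOp (N n : ℕ) : Perm (Fin n) →* EndT N n where
  toFun σ := Matrix.of fun f g => if f ∘ σ = g then 1 else 0
  map_one' := by
    ext f g
    simp [Matrix.one_apply]
  map_mul' σ τ := by
    ext f g
    simp only [Matrix.mul_apply, Matrix.of_apply, ite_mul, one_mul, zero_mul, Finset.sum_ite_eq,
      Finset.mem_univ, if_true, Perm.coe_mul, Function.comp_assoc]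
    exact if_congr Iff.rfl rfl rfl

lemma permOp_apply (σ : Perm (Fin n)) (f g : Fin n → Fin N) :
    permOp N n σ f g = if f ∘ σ = g then 1 else 0 := rfl

lemma permOp_mul_apply (σ : Perm (Fin n)) (M : EndT N n) (f g : Fin n → Fin N) :
    (permOp N n σ * M) f g = M (f ∘ σ) g := by
  simp [Matrix.mul_apply, permOp_apply]

lemma star_permOp (σ : Perm (Fin n)) : star (permOp N n σ) = permOp N n σ⁻¹ := by
  ext f g
  rw [Matrix.star_apply, permOp_apply, permOp_apply, apply_ite star, star_one, star_zero]
  exact if_congr (eq_comm.trans (σ.symm.eq_comp_symm f g)) rfl rfl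

lemma mul_permOp_inv_apply (σ : Perm (Fin n)) (M : EndT N n) (f g : Fin n → Fin N) :
    (M * permOp N n σ⁻¹) f g = M f (g ∘ σ) := by
  simp [Matrix.mul_apply, ← star_permOp, permOp_apply, eq_comm]

lemma flipOp_eq_permOp (a b : Fin n) : flipOp N n a b = permOp N n (swap a b) := by
  ext f g
  have comp_swap_eq_iff : f ∘ swap a b = g ↔
      (f a = g b ∧ f b = g a) ∧ ∀ i ∈ Finset.univ, i ≠ a ∧ i ≠ b → f i = g i := by
    simp only [funext_iff, Function.comp_apply, swap_apply_def]
    grind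
  have entry (i : Fin n) : (if i ≠ a ∧ i ≠ b then (if f i = g i then (1 : ℂ) else 0) else 1) =
      if (i ≠ a ∧ i ≠ b → f i = g i) then 1 else 0 := by
    split_ifs <;> tauto
  simp only [permOp_apply, flipOp, entry, Finset.prod_boole, ite_mul, one_mul, zero_mul]
  split_ifs <;> tauto

/-- The endomorphism `W_1 ⊗ ⋯ ⊗ W_n` of `V^{⊗ n}`. -/
def pureTensor (W : Fin n → Matrix (Fin N) (Fin N) ℂ) : EndT N n :=
  fun f g => ∏ i, W i (f i) (g i)

lemma pureTensor_mul (W Z : Fin n → Matrix (Fin N) (Fin N) ℂ) :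
    pureTensor W * pureTensor Z = pureTensor (W * Z) := by
  ext f g
  simp only [Matrix.mul_apply, pureTensor, Pi.mul_apply, Finset.prod_univ_sum,
    ← Finset.prod_mul_distrib, Fintype.piFinset_univ]

lemma pureTensor_one : pureTensor (1 : Fin n → Matrix (Fin N) (Fin N) ℂ) = 1 := by
  ext f g
  simp only [pureTensor, Pi.one_apply, Matrix.one_apply, Finset.prod_boole, funext_iff,
    Finset.mem_univ, true_implies]

lemma pureTensor_single (f g : Fin n → Fin N) :
    pureTensor (fun i => Matrix.single (f i) (g i) 1) = Matrix.single f g (1 : ℂ) := by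
  ext f' g'
  simp only [pureTensor, Matrix.single_apply, Finset.prod_boole, funext_iff, Finset.mem_univ,
    true_implies, forall_and]

lemma conj_pureTensor (σ : Perm (Fin n)) (W : Fin n → Matrix (Fin N) (Fin N) ℂ) :
    permOp N n σ * pureTensor (W ∘ σ) * permOp N n σ⁻¹ = pureTensor W := by
  ext f g
  rw [mul_permOp_inv_apply, permOp_mul_apply]
  exact Fintype.prod_equiv σ _ _ fun i => rfl

lemma glAct_eq_sum (X : Matrix (Fin N) (Fin N) ℂ) :
    glAct N n X = ∑ a, pureTensor (Function.update 1 a X) := by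
  refine Finset.sum_congr rfl fun a _ => Matrix.ext fun f g => ?_
  change X (f a) (g a) * _ = ∏ i, Function.update (1 : Fin n → Matrix _ _ ℂ) a X i (f i) (g i)
  rw [← Finset.mul_prod_erase _ _ (Finset.mem_univ a), ← Finset.mul_prod_erase _
    (fun i => Function.update (1 : Fin n → Matrix _ _ ℂ) a X i (f i) (g i)) (Finset.mem_univ a),
    Function.update_self, if_neg (by simp), one_mul]
  congr 1
  refine Finset.prod_congr rfl fun i hi => ?_
  have hia : i ≠ a := Finset.ne_of_mem_erase hi
  rw [if_pos hia, Function.update_of_ne hia, Pi.one_apply, Matrix.one_apply]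

lemma glAct_mem_centralizer (X : Matrix (Fin N) (Fin N) ℂ) :
    glAct N n X ∈ Subalgebra.centralizer ℂ (Set.range (permOp N n)) := by
  rw [Subalgebra.mem_centralizer_iff, Set.forall_mem_range]
  intro σ
  have conj_glAct : permOp N n σ * glAct N n X * permOp N n σ⁻¹ = glAct N n X := by
    simp only [glAct_eq_sum, Finset.mul_sum, Finset.sum_mul]
    refine Fintype.sum_equiv σ _ _ fun a => ?_
    have update_comp : Function.update (1 : Fin n → Matrix _ _ ℂ) (σ a) X ∘ σ =
        Function.update (1 : Fin n → Matrix _ _ ℂ) a X :=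
      Function.update_comp_eq_of_injective _ σ.injective a X
    rw [← update_comp, conj_pureTensor]
  nth_rewrite 2 [← conj_glAct]
  rw [mul_assoc, ← map_mul, inv_mul_cancel, map_one, mul_one]

lemma conjSum_pureTensor_comp (σ : Perm (Fin n)) (W : Fin n → Matrix (Fin N) (Fin N) ℂ) :
    conjSum ℂ (permOp N n) (pureTensor (W ∘ σ)) = conjSum ℂ (permOp N n) (pureTensor W) := by
  rw [← conj_pureTensor σ W, conjSum_conj]

lemma conjSum_pureTensor_piecewise_mul_glAct {s : Finset (Fin n)} {a : Fin n} (ha : a ∉ s)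
    (X : Fin n → Matrix (Fin N) (Fin N) ℂ) :
    conjSum ℂ (permOp N n) (pureTensor (s.piecewise X 1)) * glAct N n (X a) =
      ∑ b ∈ s, conjSum ℂ (permOp N n)
        (pureTensor (s.piecewise (Function.update X b (X b * X a)) 1)) +
      (sᶜ.card : ℂ) • conjSum ℂ (permOp N n) (pureTensor ((insert a s).piecewise X 1)) := by
  rw [conjSum_mul (glAct_mem_centralizer _), glAct_eq_sum, Finset.mul_sum, map_sum,
    ← Finset.sum_add_sum_compl s, Nat.cast_smul_eq_nsmul]
  simp only [pureTensor_mul]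
  congr 1
  · refine Finset.sum_congr rfl fun b hb => ?_
    congr 2
    ext i : 1
    rcases eq_or_ne i b with rfl | hib
    · simp [hb]
    · by_cases hi : i ∈ s <;> simp [hi, hib]
  · refine Finset.sum_eq_card_nsmul fun b hb => ?_
    rw [Finset.mem_compl] at hb
    rw [← conjSum_pureTensor_comp (swap a b) ((insert a s).piecewise X 1)]
    congr 2
    ext i : 1
    rcases eq_or_ne i a with rfl | hia
    · rcases eq_or_ne i b with rfl | hib
      · simp [ha]
      · simp [ha, hb, hib, hib.symm]
    rcases eq_or_ne i b with rfl | hib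
    · simp [hb]
    by_cases hi : i ∈ s <;> simp [hi, hib, hia, swap_apply_of_ne_of_ne hia hib]

/-- Schur–Weyl duality. -/
lemma centralizer_range_permOp :
    Subalgebra.centralizer ℂ (Set.range (permOp N n)) =
      Algebra.adjoin ℂ (Set.range (glAct N n)) := by
  have smul_mem_iff {k : ℂ} (hk : k ≠ 0) {b : EndT N n} :
      k • b ∈ Algebra.adjoin ℂ (Set.range (glAct N n)) ↔
        b ∈ Algebra.adjoin ℂ (Set.range (glAct N n)) :=
    (Subalgebra.toSubmodule (Algebra.adjoin ℂ _)).smul_mem_iff hk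
  have conjSum_pureTensor_mem (s : Finset (Fin n)) (X : Fin n → Matrix (Fin N) (Fin N) ℂ) :
      conjSum ℂ (permOp N n) (pureTensor (s.piecewise X 1)) ∈
        Algebra.adjoin ℂ (Set.range (glAct N n)) := by
    induction s using Finset.induction_on generalizing X with
    | empty =>
      rw [Finset.piecewise_empty, pureTensor_one, conjSum_of_mem_centralizer (one_mem _)]
      exact nsmul_mem (one_mem _) _
    | insert a s ha ih =>
      have hcard : (sᶜ.card : ℂ) ≠ 0 := by
        rw [Nat.cast_ne_zero, Finset.card_ne_zero]
        exact ⟨a, Finset.mem_compl.2 ha⟩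
      have hmem := mul_mem (ih X) (Algebra.subset_adjoin ⟨X a, rfl⟩)
      rw [conjSum_pureTensor_piecewise_mul_glAct ha,
        add_mem_cancel_left (sum_mem fun b _ => ih _)] at hmem
      exact (smul_mem_iff hcard).1 hmem
  have conjSum_mem (M : EndT N n) :
      conjSum ℂ (permOp N n) M ∈ Algebra.adjoin ℂ (Set.range (glAct N n)) := by
    induction M using Matrix.induction_on' with
    | h_zero => rw [map_zero]; exact zero_mem _
    | h_add p q hp hq => rw [map_add]; exact add_mem hp hq
    | h_std_basis f g k =>
      rw [← mul_one k, ← smul_eq_mul, ← Matrix.smul_single, map_smul, ← pureTensor_single,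
        ← Finset.piecewise_univ (fun i => Matrix.single (f i) (g i) 1) 1]
      exact Subalgebra.smul_mem _ (conjSum_pureTensor_mem _ _) k
  refine le_antisymm (fun b hb => ?_) (Algebra.adjoin_le ?_)
  · have hmem := conjSum_mem b
    rw [conjSum_of_mem_centralizer hb, ← Nat.cast_smul_eq_nsmul ℂ] at hmem
    exact (smul_mem_iff (Nat.cast_ne_zero.2 Fintype.card_ne_zero)).1 hmem
  · rintro _ ⟨X, rfl⟩
    exact glAct_mem_centralizer X

lemma mulVec_mem_of_mem_centralizer {U : Submodule ℂ ((Fin n → Fin N) → ℂ)}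
    (hU : ∀ X : Matrix (Fin N) (Fin N) ℂ, ∀ x ∈ U, (glAct N n X).mulVec x ∈ U) {b : EndT N n}
    (hb : b ∈ Subalgebra.centralizer ℂ (Set.range (permOp N n))) :
    ∀ x ∈ U, b.mulVec x ∈ U := by
  rw [centralizer_range_permOp] at hb
  induction hb using Algebra.adjoin_induction with
  | mem b hb =>
    obtain ⟨X, rfl⟩ := hb
    exact hU X
  | algebraMap k =>
    intro x hx
    rw [Algebra.algebraMap_eq_smul_one, Matrix.smul_mulVec, Matrix.one_mulVec]
    exact U.smul_mem k hx
  | add b d _ _ hb hd =>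
    intro x hx
    rw [Matrix.add_mulVec]
    exact U.add_mem (hb x hx) (hd x hx)
  | mul b d _ _ hb hd =>
    intro x hx
    rw [← Matrix.mulVec_mulVec]
    exact hb _ (hd x hx)

/-- The entry at `(f, f)` of the Young symmetrizer is the number of permutations of `R`. -/
lemma youngSymmetrizer_permOp_ne_zero {R C : Finset (Fin n)} {f : Fin n → Fin N}
    (hR : ∀ i ∈ R, ∀ j ∈ R, f i = f j) (hC : Set.InjOn f C) :
    youngSymmetrizer (permOp N n) R C ≠ 0 := by
  have comp_eq {σ : Perm (Fin n)} (hσ : σ.support ⊆ R) : f ∘ σ = f := by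
    ext i : 1
    by_cases hi : i ∈ σ.support
    · exact hR _ (hσ (Perm.apply_mem_support.2 hi)) _ (hσ hi)
    · rw [Function.comp_apply, Perm.notMem_support.1 hi]
  have eq_one {σ : Perm (Fin n)} (hσ : σ.support ⊆ C) (h : f ∘ σ = f) : σ = 1 := by
    ext i : 1
    by_contra hi
    have hi' := Perm.mem_support.2 hi
    exact hi (hC (hσ (Perm.apply_mem_support.2 hi')) (hσ hi') (congrFun h i))
  have antisymmetrizer_apply : symmetrizer (signTwist (permOp N n)) C f f = 1 := by
    rw [symmetrizer, Matrix.sum_apply, Finset.sum_eq_single_of_mem 1 (by simp)]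
    · simp
    · intro σ hσ hσ1
      have : f ∘ σ ≠ f := fun h => hσ1 (eq_one (by simpa using hσ) h)
      simp [signTwist_apply, permOp_apply, this]
  intro h
  have apply_eq_zero := congrFun (congrFun h f) f
  rw [youngSymmetrizer, symmetrizer, Finset.sum_mul, Matrix.sum_apply, Finset.sum_congr rfl
    (g := fun _ => (1 : ℂ))] at apply_eq_zero
  · rw [Finset.sum_const, nsmul_one, Matrix.zero_apply, Nat.cast_eq_zero,
      Finset.card_eq_zero] at apply_eq_zero
    exact Finset.notMem_empty _ (apply_eq_zero ▸ Finset.mem_filter_univ (1 : Perm (Fin n)) |>.2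
      (by simp))
  · intro σ hσ
    rw [permOp_mul_apply, comp_eq (by simpa using hσ), antisymmetrizer_apply]

end TensorPower

section Tableau

open Equiv

lemma isChain_eq_succ_of_pairwise_lt {ι : Type*} {f : ι → ℕ} {L : List ι}
    (hlt : L.Pairwise fun a b => f a < f b)
    (hconn : ∀ a ∈ L, ∀ k ≤ f a, ∃ b ∈ L, f b = k) :
    L.IsChain fun a b => f b = f a + 1 := by
  rw [List.isChain_iff_getElem]
  intro i hi
  rw [List.pairwise_iff_getElem] at hlt
  have hlt_succ := hlt i (i + 1) (by omega) hi i.lt_succ_self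
  obtain ⟨b, hb, hfb⟩ := hconn _ (List.getElem_mem hi) _ hlt_succ
  obtain ⟨j, hj, rfl⟩ := List.getElem_of_mem hb
  have hij : i < j := by
    by_contra! hji
    rcases hji.eq_or_lt with rfl | hji
    · omega
    · have := hlt j i hj (by omega) hji
      omega
  rcases (Nat.succ_le_of_lt hij).eq_or_lt with rfl | hij
  · exact hfb
  · have := hlt (i + 1) j hi hj hij
    omega

lemma star_content {n : ℕ} (T : Fin n → ℕ × ℕ) (i : Fin n) :
    star (content T i) = content T i := by
  simp [content]

variable {n : ℕ} {T : Fin n → ℕ × ℕ}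

namespace IsStandardTableau

lemma injective (hT : IsStandardTableau n T) : Function.Injective T :=
  fun i j h => le_antisymm (hT.2 i j (h ▸ le_rfl) (h ▸ le_rfl))
    (hT.2 j i (h ▸ le_rfl) (h ▸ le_rfl))

lemma transpose (hT : IsStandardTableau n T) : IsStandardTableau n (Prod.swap ∘ T) := by
  refine ⟨?_, fun i j h1 h2 => hT.2 i j h2 h1⟩
  rintro _ ⟨i, rfl⟩ q h1 h2
  obtain ⟨j, hj⟩ := hT.1 (T i) ⟨i, rfl⟩ q.swap h2 h1
  exact ⟨j, by rw [Function.comp_apply, hj, Prod.swap_swap]⟩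

lemma apply_zero {m : ℕ} {T : Fin (m + 1) → ℕ × ℕ} (hT : IsStandardTableau (m + 1) T) :
    T 0 = (0, 0) := by
  obtain ⟨i, hi⟩ := hT.1 (T 0) ⟨0, rfl⟩ (0, 0) (Nat.zero_le _) (Nat.zero_le _)
  have hi0 : i ≤ 0 := hT.2 i 0 (by simp [hi]) (by simp [hi])
  rwa [Fin.le_zero_iff.1 hi0] at hi

/-- A diagram that is not a hook contains the nodes `(0, 0)` and `(1, 1)`, of equal contents. -/
lemma eq_zero_or_eq_zero (hT : IsStandardTableau n T) (hc : Function.Injective (content T))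
    (i : Fin n) : (T i).1 = 0 ∨ (T i).2 = 0 := by
  by_contra! h
  obtain ⟨a, ha⟩ := hT.1 (T i) ⟨i, rfl⟩ (0, 0) (Nat.zero_le _) (Nat.zero_le _)
  obtain ⟨b, hb⟩ := hT.1 (T i) ⟨i, rfl⟩ (1, 1) (Nat.one_le_iff_ne_zero.2 h.1)
    (Nat.one_le_iff_ne_zero.2 h.2)
  have hab : a = b := hc (by simp [content, ha, hb])
  rw [← hab, ha] at hb
  simp at hb

lemma isChain_content_row (hT : IsStandardTableau n T) :
    ((List.finRange n).filter fun i => (T i).1 = 0).IsChain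
      fun a b => content T b = content T a + 1 := by
  have pairwise_lt : ((List.finRange n).filter fun i => (T i).1 = 0).Pairwise
      fun a b => (T a).2 < (T b).2 := by
    rw [List.pairwise_filter]
    refine (List.pairwise_lt_finRange n).imp fun {a b} hab ha hb => ?_
    by_contra! h
    exact hab.not_ge (hT.2 b a (by simp_all) h)
  refine (isChain_eq_succ_of_pairwise_lt pairwise_lt ?_).imp_of_mem_imp fun a b ha hb h => ?_
  · intro a _ k hk
    obtain ⟨b, hb⟩ := hT.1 (T a) ⟨a, rfl⟩ (0, k) (Nat.zero_le _) hk
    exact ⟨b, by simp [hb], by rw [hb]⟩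
  · have ha : (T a).1 = 0 := by simpa using ha
    have hb : (T b).1 = 0 := by simpa using hb
    simp [content, ha, hb, h]

lemma isChain_content_col (hT : IsStandardTableau n T) :
    ((List.finRange n).filter fun i => (T i).2 = 0).IsChain
      fun a b => content T a = content T b + 1 := by
  refine hT.transpose.isChain_content_row.imp fun a b h => ?_
  simp only [content, Function.comp_apply, Prod.fst_swap, Prod.snd_swap] at h ⊢
  linear_combination h

lemma content_sub_sq_ne_one (hT : IsStandardTableau n T) (hc : Function.Injective (content T))
    {a b : Fin n} (ha : (T a).1 = 0) (ha' : (T a).2 ≠ 0) (hb : (T b).1 ≠ 0) :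
    (content T a - content T b) ^ 2 ≠ 1 := by
  have content_sub : content T a - content T b = ((T a).2 + (T b).1 : ℕ) := by
    simp [content, ha, (hT.eq_zero_or_eq_zero hc b).resolve_left hb]
  rw [content_sub]
  norm_cast
  rw [Nat.pow_eq_one]
  omega

end IsStandardTableau

/-- The entries of the first row of a tableau. -/
def firstRow (T : Fin n → ℕ × ℕ) : Finset (Fin n) := {i | (T i).1 = 0}

/-- The entries of the first column of a tableau. -/
def firstCol (T : Fin n → ℕ × ℕ) : Finset (Fin n) := {i | (T i).2 = 0}

/-- The fusion product of a tableau in the group algebra, acting on `V^{⊗ n}` as `F(T)`. -/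
def fusionElement (T : Fin n → ℕ × ℕ) : MonoidAlgebra ℂ (Perm (Fin n)) :=
  fusionProd (MonoidAlgebra.of ℂ _) (content T) (List.finRange n)

/-- The Young symmetrizer of a hook tableau, whose only row and column with more than one node are
the first ones. -/
def hookSymmetrizer (T : Fin n → ℕ × ℕ) : MonoidAlgebra ℂ (Perm (Fin n)) :=
  youngSymmetrizer (MonoidAlgebra.of ℂ _) (firstRow T) (firstCol T)

lemma biAssociated_hookSymmetrizer_comp (T : Fin n → ℕ × ℕ) (ρ : Perm (Fin n)) :
    BiAssociated (hookSymmetrizer (T ∘ ρ)) (hookSymmetrizer T) := by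
  have map_firstRow : (firstRow (T ∘ ρ)).map ρ.toEmbedding = firstRow T := by
    ext i
    simp [firstRow]
  have map_firstCol : (firstCol (T ∘ ρ)).map ρ.toEmbedding = firstCol T := by
    ext i
    simp [firstCol]
  rw [hookSymmetrizer, hookSymmetrizer, ← map_firstRow, ← map_firstCol, ← conj_youngSymmetrizer]
  exact BiAssociated.conj _ (Units.map (MonoidAlgebra.of ℂ (Perm (Fin n))) (toUnits ρ))

namespace IsStandardTableau

lemma fusionProd_row_mul_fusionProd_col (hT : IsStandardTableau n T) :
    fusionProd (MonoidAlgebra.of ℂ _) (content T)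
        ((List.finRange n).filter fun i => (T i).1 = 0) *
      fusionProd (MonoidAlgebra.of ℂ _) (content T)
        ((List.finRange n).filter fun i => (T i).2 = 0) = hookSymmetrizer T := by
  rw [fusionProd_eq_symmetrizer ((List.nodup_finRange n).filter _) hT.isChain_content_row,
    fusionProd_eq_antisymmetrizer ((List.nodup_finRange n).filter _) hT.isChain_content_col,
    hookSymmetrizer, youngSymmetrizer, List.toFinset_filter, List.toFinset_filter,
    List.toFinset_finRange]
  simp only [firstRow, firstCol, decide_eq_true_eq]

lemma biAssociated_fusionElement_hookSymmetrizer (hT : IsStandardTableau n T)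
    (hc : Function.Injective (content T)) :
    BiAssociated (fusionElement T) (hookSymmetrizer T) := by
  rw [← hT.fusionProd_row_mul_fusionProd_col, fusionElement]
  rcases n with _ | m
  · simpa using BiAssociated.refl _
  have hnd := List.nodup_finRange (m + 1)
  rw [List.finRange_succ] at hnd ⊢
  set L := (List.finRange m).map Fin.succ
  have ne_zero {i : Fin (m + 1)} (hi : i ∈ L) : ¬((T i).1 = 0 ∧ (T i).2 = 0) := by
    rw [← Prod.ext_iff (y := (0, 0)), ← hT.apply_zero]
    exact hT.injective.ne (ne_of_mem_of_not_mem hi (List.nodup_cons.1 hnd).1)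
  have filter_col : L.filter (fun i => (T i).2 = 0) = L.filter fun i => !decide ((T i).1 = 0) := by
    refine List.filter_congr fun i hi => ?_
    have := ne_zero hi
    have := hT.eq_zero_or_eq_zero hc i
    rw [← decide_not, decide_eq_decide]
    tauto
  rw [List.filter_cons_of_pos (by simp [hT.apply_zero]),
    List.filter_cons_of_pos (by simp [hT.apply_zero]), filter_col]
  refine biAssociated_fusionProd_cons hc _ hnd fun a ha b _ har hbr => ?_
  have har : (T a).1 = 0 := by simpa using har
  exact hT.content_sub_sq_ne_one hc har (fun h => ne_zero ha ⟨har, h⟩) (by simpa using hbr)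

lemma hasScalarCorner_fusionElement (hT : IsStandardTableau n T)
    (hc : Function.Injective (content T)) : HasScalarCorner ℂ (fusionElement T) := by
  refine .of_biAssociated (hasScalarCorner_youngSymmetrizer ?_ ?_)
    (hT.biAssociated_fusionElement_hookSymmetrizer hc)
  · ext i
    simpa [firstRow, firstCol] using hT.eq_zero_or_eq_zero hc i
  · rintro ⟨i⟩
    obtain ⟨j, hj⟩ := hT.1 (T i) ⟨i, rfl⟩ (0, 0) (Nat.zero_le _) (Nat.zero_le _)
    exact ⟨j, by simp [firstRow, firstCol, hj]⟩

lemma biAssociated_fusionElement (hT : IsStandardTableau n T)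
    (hc : Function.Injective (content T)) {T' : Fin n → ℕ × ℕ} (hT' : IsStandardTableau n T')
    (hc' : Function.Injective (content T')) (hrange : Set.range T' = Set.range T) :
    BiAssociated (fusionElement T) (fusionElement T') := by
  obtain ⟨ρ, rfl⟩ : ∃ ρ : Perm (Fin n), T' = T ∘ ρ := by
    refine ⟨(Equiv.ofInjective T' hT'.injective).trans
      ((Equiv.setCongr hrange).trans (Equiv.ofInjective T hT.injective).symm), ?_⟩
    ext1 i
    simp [Equiv.apply_ofInjective_symm]
  exact (hT.biAssociated_fusionElement_hookSymmetrizer hc).trans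
    ((biAssociated_hookSymmetrizer_comp T ρ).symm.trans
      (hT'.biAssociated_fusionElement_hookSymmetrizer hc').symm)

end IsStandardTableau

end Tableau

section TableauSubspace

open Equiv

variable {N n : ℕ} {T : Fin n → ℕ × ℕ}

/-- The action of the group algebra of the symmetric group on `V^{⊗ n}`. -/
abbrev permAlgHom (N n : ℕ) : MonoidAlgebra ℂ (Perm (Fin n)) →ₐ[ℂ] EndT N n :=
  MonoidAlgebra.lift ℂ _ _ (permOp N n)

lemma fusionProd_eq_prod {ι K E : Type*} [LinearOrder ι] [Field K] [Ring E] [Algebra K E]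
    {P : Perm ι →* E} {c : ι → K} {L : List ι} (hL : L.Pairwise (· < ·)) :
    fusionProd P c L = ((L.flatMap fun i => (L.filter fun j => decide (i < j)).map
      fun j => (i, j)).map fun p => ybFactor P c p.1 p.2).prod := by
  induction L with
  | nil => rfl
  | cons a L ih =>
    rw [List.pairwise_cons] at hL
    have filter_head : (a :: L).filter (fun j => decide (a < j)) = L := by
      rw [List.filter_cons_of_neg (by simp), List.filter_eq_self]
      simpa using hL.1
    have flatMap_tail :
        L.flatMap (fun i => ((a :: L).filter fun j => decide (i < j)).map fun j => (i, j)) =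
          L.flatMap fun i => (L.filter fun j => decide (i < j)).map fun j => (i, j) := by
      refine List.flatMap_congr fun i hi => ?_
      rw [List.filter_cons_of_neg (by simpa using (hL.1 i hi).le)]
    rw [fusionProd_cons, ih hL.2, List.flatMap_cons, filter_head, flatMap_tail, List.map_append,
      List.prod_append, List.map_map]
    rfl

lemma FT_eq_fusionProd : FT N T = fusionProd (permOp N n) (content T) (List.finRange n) := by
  rw [fusionProd_eq_prod (List.pairwise_lt_finRange n), FT, lexPairs]
  simp only [flipOp_eq_permOp, ybFactor]

lemma permAlgHom_fusionElement : permAlgHom N n (fusionElement T) = FT N T := by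
  rw [fusionElement, map_fusionProd, FT_eq_fusionProd]
  congr 1
  ext1 σ
  exact MonoidAlgebra.lift_of _ σ

lemma star_FT (hc : Function.Injective (content T)) : star (FT N T) = FT N T := by
  rw [FT_eq_fusionProd]
  exact star_fusionProd star_permOp (star_content T) hc (List.nodup_finRange n)

lemma permAlgHom_mulVec_glAct (z : MonoidAlgebra ℂ (Perm (Fin n)))
    (X : Matrix (Fin N) (Fin N) ℂ) (x : (Fin n → Fin N) → ℂ) :
    (permAlgHom N n z).mulVec ((glAct N n X).mulVec x) =
      (glAct N n X).mulVec ((permAlgHom N n z).mulVec x) := by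
  rw [Matrix.mulVec_mulVec, Matrix.mulVec_mulVec,
    (commute_lift (glAct_mem_centralizer X) z).eq]

lemma glAct_mulVec_mem_range_FT (X : Matrix (Fin N) (Fin N) ℂ) {x : (Fin n → Fin N) → ℂ}
    (hx : x ∈ (FT N T).mulVecLin.range) : (glAct N n X).mulVec x ∈ (FT N T).mulVecLin.range := by
  obtain ⟨y, rfl⟩ := hx
  refine ⟨(glAct N n X).mulVec y, ?_⟩
  simp only [Matrix.mulVecLin_apply, ← permAlgHom_fusionElement, permAlgHom_mulVec_glAct]

lemma IsStandardTableau.FT_ne_zero (hT : IsStandardTableau n T)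
    (hc : Function.Injective (content T)) (hrow : ∀ i, (T i).1 < N) : FT N T ≠ 0 := by
  rw [← permAlgHom_fusionElement]
  refine ((hT.biAssociated_fusionElement_hookSymmetrizer hc).map (permAlgHom N n)).ne_zero ?_
  have comp_of : (permAlgHom N n : MonoidAlgebra ℂ (Perm (Fin n)) →* EndT N n).comp
      (MonoidAlgebra.of ℂ _) = permOp N n := by
    ext1 σ
    exact MonoidAlgebra.lift_of _ σ
  rw [hookSymmetrizer, map_youngSymmetrizer, comp_of]
  refine youngSymmetrizer_permOp_ne_zero (f := fun i => ⟨(T i).1, hrow i⟩) ?_ ?_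
  · simp +contextual [firstRow]
  · intro i hi j hj hij
    simp only [firstCol, Finset.coe_filter_univ, Set.mem_ofPred_eq] at hi hj
    exact hT.injective (Prod.ext (Fin.ext_iff.1 hij) (hi.trans hj.symm))

open scoped ComplexOrder in
lemma IsStandardTableau.eq_bot_or_eq_range_FT (hT : IsStandardTableau n T)
    (hc : Function.Injective (content T)) {U : Submodule ℂ ((Fin n → Fin N) → ℂ)}
    (hle : U ≤ (FT N T).mulVecLin.range)
    (hU : ∀ X : Matrix (Fin N) (Fin N) ℂ, ∀ x ∈ U, (glAct N n X).mulVec x ∈ U) :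
    U = ⊥ ∨ U = (FT N T).mulVecLin.range := by
  refine or_iff_not_imp_left.2 fun hbot => hle.antisymm fun v hv => ?_
  obtain ⟨u, hu, hu0⟩ := U.ne_bot_iff.1 hbot
  obtain ⟨b, hb, rfl⟩ := exists_mem_centralizer_mulVec_eq star_permOp
    (hT.hasScalarCorner_fusionElement hc) permAlgHom_fusionElement (star_FT hc) (hle hu) hv hu0
  exact mulVec_mem_of_mem_centralizer hU hb u hu

lemma IsStandardTableau.exists_isUnit_map_range_FT (hT : IsStandardTableau n T)
    (hc : Function.Injective (content T)) {T' : Fin n → ℕ × ℕ} (hT' : IsStandardTableau n T')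
    (hc' : Function.Injective (content T')) (hrange : Set.range T' = Set.range T) :
    ∃ z : MonoidAlgebra ℂ (Perm (Fin n)), IsUnit (permAlgHom N n z) ∧
      (FT N T).mulVecLin.range.map (permAlgHom N n z).mulVecLin = (FT N T').mulVecLin.range := by
  obtain ⟨u, v, huv⟩ := hT.biAssociated_fusionElement hc hT' hc' hrange
  have map_huv : permAlgHom N n u * FT N T = FT N T' * permAlgHom N n v := by
    rw [← permAlgHom_fusionElement, ← permAlgHom_fusionElement, ← map_mul, huv, map_mul]
  obtain ⟨u', hu'⟩ := u.isUnit.map (permAlgHom N n)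
  obtain ⟨v', hv'⟩ := v.isUnit.map (permAlgHom N n)
  rw [← hu', ← hv'] at map_huv
  exact ⟨u, u.isUnit.map _, by rw [← hu', map_range_mulVecLin_of_mul_eq map_huv]⟩

end TableauSubspace

/-- For a standard Young tableau `T` with `n` entries, at most `N` rows
and pairwise distinct classical contents, the image `W_T` of `F(T)` is a nonzero subspace
of `V^{⊗n}`, invariant under the diagonal action of `gl(V)`, and irreducible as a
`gl(V)`-module; moreover for any other standard Young tableau `T'` of the same shape
(with pairwise distinct contents), `W_T` and `W_{T'}` are isomorphic `gl(V)`-modules. -/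
theorem tableau_subspace_irreducible
    (N n : ℕ) (T : Fin n → ℕ × ℕ)
    (hT : IsStandardTableau n T)
    (hrow : ∀ i, (T i).1 < N)
    (hcc : ∀ i j : Fin n, i ≠ j → content T i ≠ content T j) :
    LinearMap.range (Matrix.mulVecLin (FT N T)) ≠ ⊥ ∧
    (∀ X : Matrix (Fin N) (Fin N) ℂ,
      ∀ x ∈ LinearMap.range (Matrix.mulVecLin (FT N T)),
        (glAct N n X).mulVec x ∈ LinearMap.range (Matrix.mulVecLin (FT N T))) ∧
    (∀ U : Submodule ℂ ((Fin n → Fin N) → ℂ),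
      U ≤ LinearMap.range (Matrix.mulVecLin (FT N T)) →
      (∀ X : Matrix (Fin N) (Fin N) ℂ, ∀ x ∈ U, (glAct N n X).mulVec x ∈ U) →
      U = ⊥ ∨ U = LinearMap.range (Matrix.mulVecLin (FT N T))) ∧
    (∀ T' : Fin n → ℕ × ℕ, IsStandardTableau n T' → (∀ i, (T' i).1 < N) →
      (∀ i j : Fin n, i ≠ j → content T' i ≠ content T' j) →
      Set.range T' = Set.range T →
      ∃ g : ((Fin n → Fin N) → ℂ) →ₗ[ℂ] ((Fin n → Fin N) → ℂ),
        Submodule.map g (LinearMap.range (Matrix.mulVecLin (FT N T))) =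
          LinearMap.range (Matrix.mulVecLin (FT N T')) ∧
        (∀ x ∈ LinearMap.range (Matrix.mulVecLin (FT N T)), g x = 0 → x = 0) ∧
        (∀ X : Matrix (Fin N) (Fin N) ℂ,
          ∀ x ∈ LinearMap.range (Matrix.mulVecLin (FT N T)),
            g ((glAct N n X).mulVec x) = (glAct N n X).mulVec (g x))) := by
  have hc : Function.Injective (content T) := Function.injective_iff_pairwise_ne.2 hcc
  refine ⟨fun hbot => hT.FT_ne_zero hc hrow ?_, fun X x hx => glAct_mulVec_mem_range_FT X hx,
    fun U hle hU => hT.eq_bot_or_eq_range_FT hc hle hU, fun T' hT' _ hcc' hrange => ?_⟩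
  · rwa [LinearMap.range_eq_bot, ← Matrix.toLin'_apply', LinearEquiv.map_eq_zero_iff] at hbot
  · have hc' : Function.Injective (content T') := Function.injective_iff_pairwise_ne.2 hcc'
    obtain ⟨z, hz, hmap⟩ := hT.exists_isUnit_map_range_FT (N := N) hc hT' hc' hrange
    exact ⟨(permAlgHom N n z).mulVecLin, hmap,
      fun x _ hx => Matrix.mulVec_injective_of_isUnit hz (hx.trans (Matrix.mulVec_zero _).symm),
      fun X x _ => permAlgHom_mulVec_glAct z X x⟩

end
end
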